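/- arXiv:1902.07871 — 2 statements merged into one kernel-verified Lean document; each statement's English description precedes it below -/
import Mathlib

section
/- There exist X, Y ∈ 2^ℕ and a constant c such that X is Martin-Löf random, Y is not Martin-Löf random, and K(X↾n) + K(Y↾n) ≥ 2n − c for all n, where X↾n denotes the string of the first n bits of X. -/
open MeasureTheory Filter

/-- Cantor space: the space of infinite binary sequences. -/
abbrev Cantor : Type := ℕ → Bool

/-- Finite binary strings. -/
abbrev BStr : Type := List Bool

/-- The cylinder set of sequences extending the string `x`. -/
def cyl (x : BStr) : Set Cantor := {Z | ∀ i : Fin x.length, Z i.1 = x.get i}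

/-- The string of the first `n` bits of `Z`. -/
def seg (Z : Cantor) (n : ℕ) : BStr := List.ofFn fun i : Fin n => Z i.1

/-- `lam` is the uniform (fair-coin product) measure: every cylinder `[x]`
has measure `2^{-|x|}`. -/
def IsUniform (lam : Measure Cantor) : Prop :=
  ∀ x : BStr, lam (cyl x) = (2 : ENNReal)⁻¹ ^ x.length

/-- `(G_m)` is a Martin-Löf test with respect to the measure `ρ`:
the sets `G_m` are uniformly effectively open and `ρ (G_m) ≤ 2^{-m}`. -/
def IsMLTest (ρ : Measure Cantor) (G : ℕ → Set Cantor) : Prop :=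
  (∃ σ : ℕ → ℕ → BStr, Computable₂ σ ∧ ∀ m, G m = ⋃ i, cyl (σ m i)) ∧
  ∀ m, ρ (G m) ≤ (2 : ENNReal)⁻¹ ^ m

/-- `μ` is Martin-Löf absolutely continuous in `ρ`: `inf_m μ(G_m) = 0`
for every `ρ`-Martin-Löf test `(G_m)`. -/
def MLAC (μ ρ : Measure Cantor) : Prop :=
  ∀ G : ℕ → Set Cantor, IsMLTest ρ G → ⨅ m, μ (G m) = 0

/-- `Z` is Martin-Löf random with respect to `lam`. -/
def MLRandom (lam : Measure Cantor) (Z : Cantor) : Prop :=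
  ∀ G : ℕ → Set Cantor, IsMLTest lam G → Z ∉ ⋂ m, G m

/-- `ρ` is a computable measure: `ρ [x]` is a computable real, uniformly in `x`. -/
def ComputableMeasure (ρ : Measure Cantor) : Prop :=
  ∃ q : BStr → ℕ → ℚ, Computable₂ q ∧
    ∀ x k, |(q x k : ℝ) - (ρ (cyl x)).toReal| ≤ (2 : ℝ)⁻¹ ^ k

/-- `U` is a universal plain machine. -/
def UniversalPlain (U : BStr →. BStr) : Prop :=
  Partrec U ∧ ∀ M : BStr →. BStr, Partrec M →
    ∃ c : ℕ, ∀ p x, x ∈ M p → ∃ q : BStr, q.length ≤ p.length + c ∧ x ∈ U q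

/-- The domain of `M` is an antichain under the prefix relation. -/
def PrefixFreeDom (M : BStr →. BStr) : Prop :=
  ∀ p q : BStr, (M p).Dom → (M q).Dom → p <+: q → p = q

/-- `U` is a universal prefix-free machine. -/
def UniversalPrefixFree (U : BStr →. BStr) : Prop :=
  Partrec U ∧ PrefixFreeDom U ∧
  ∀ M : BStr →. BStr, Partrec M → PrefixFreeDom M →
    ∃ c : ℕ, ∀ p x, x ∈ M p → ∃ q : BStr, q.length ≤ p.length + c ∧ x ∈ U q

/-- Kolmogorov complexity of the string `x` with respect to the machine `U`:
the minimal length of a `U`-description of `x`. -/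
noncomputable def cpx (U : BStr →. BStr) (x : BStr) : ℕ :=
  sInf {n | ∃ q : BStr, q.length = n ∧ x ∈ U q}

/-- A natural number `n` identified with the string `0^n`. -/
def numStr (n : ℕ) : BStr := List.replicate n false

/-- Complexity of the natural number `n` (i.e., of the string `0^n`). -/
noncomputable def cpxN (U : BStr →. BStr) (n : ℕ) : ℕ := cpx U (numStr n)

/-- The `μ`-average complexity of the strings of length `n`:
`Σ_{|x|=n} cpx(x) · μ[x]`. -/
noncomputable def avgCpx (U : BStr →. BStr) (μ : Measure Cantor) (n : ℕ) : ℝ :=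
  ∑ v : Fin n → Bool, (cpx U (List.ofFn v) : ℝ) * (μ (cyl (List.ofFn v))).toReal

/-- A measure `μ` is trivial for the complexity given by the machine `U`
(e.g. K-trivial when `U` is the universal prefix-free machine, C-trivial
when `U` is the universal plain machine). -/
def MeasTrivial (U : BStr →. BStr) (μ : Measure Cantor) : Prop :=
  ∃ c : ℝ, ∀ n : ℕ, avgCpx U μ n ≤ (cpxN U n : ℝ) + c

/-!
Let `μ` be the distribution of the output of `U`, padded with zeros, on a random program. Since
`μ [x] ≥ 2 ^ (-K x)`, a bound on the martingale `2 ^ |x| * μ [x]` bounds `|x| - K x`. For almost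
every `X` the excess `K (X↾n) - n` tends to infinity. As the atoms of `μ` are dense, the martingale
can be made unbounded along some `Y` by repeatedly steering towards an atom, and letting it rest in
between keeps it below `2 ^ (K (X↾n) - n + 1)` at `Y↾n`. Then `K (Y↾n) ≥ 2 n - K (X↾n) - O(1)`.
The sequence `Y` is not random: the sets where the martingale exceeds `2 ^ m` are uniformly
effectively open, and by Ville's inequality they have measure at most `2 ^ (-m)`.
-/

section Cylinders

variable {x y σ : BStr} {Z : Cantor} {m n : ℕ}

@[simp] lemma length_seg (Z : Cantor) (n : ℕ) : (seg Z n).length = n := by simp [seg]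

@[simp] lemma getElem_seg (Z : Cantor) {n i : ℕ} (h : i < (seg Z n).length) :
    (seg Z n)[i] = Z i := by
  simp [seg]

lemma seg_injective (Z : Cantor) : Function.Injective (seg Z) :=
  Function.LeftInverse.injective (g := List.length) (length_seg Z)

lemma seg_eq_map_range (Z : Cantor) (n : ℕ) : seg Z n = (List.range n).map Z :=
  List.ext_getElem (by simp) fun i _ _ => by simp

lemma seg_succ (Z : Cantor) (n : ℕ) : seg Z (n + 1) = seg Z n ++ [Z n] :=
  List.ofFn_succ_last

lemma mem_cyl_iff : Z ∈ cyl x ↔ seg Z x.length = x := by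
  refine ⟨fun h => ?_, fun h i => ?_⟩
  · exact List.ext_getElem (length_seg _ _) fun i _ hi => (getElem_seg _ _).trans (h ⟨i, hi⟩)
  · rw [List.get_eq_getElem, ← List.getElem_of_eq h (by simp), getElem_seg]

lemma prefix_seg_iff : x <+: seg Z n ↔ x.length ≤ n ∧ Z ∈ cyl x := by
  rw [List.prefix_iff_getElem]
  constructor
  · rintro ⟨hn, h⟩
    exact ⟨by simpa using hn, fun i => by simpa using (h i i.2).symm⟩
  · rintro ⟨hn, h⟩
    exact ⟨by simpa using hn, fun i hi => by simpa using (h ⟨i, hi⟩).symm⟩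

lemma mem_cyl_seg (Z : Cantor) (n : ℕ) : Z ∈ cyl (seg Z n) :=
  (prefix_seg_iff.1 List.prefix_rfl).2

lemma seg_prefix_seg (Z : Cantor) (h : m ≤ n) : seg Z m <+: seg Z n :=
  prefix_seg_iff.2 ⟨by simpa using h, mem_cyl_seg Z m⟩

lemma cyl_anti (h : x <+: y) : cyl y ⊆ cyl x := fun _ hZ =>
  (prefix_seg_iff.1 (h.trans (prefix_seg_iff.2 ⟨le_rfl, hZ⟩))).2

lemma prefix_or_prefix_of_mem_cyl (hx : Z ∈ cyl x) (hy : Z ∈ cyl y) : x <+: y ∨ y <+: x :=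
  List.prefix_or_prefix_of_prefix (prefix_seg_iff.2 ⟨le_max_left _ y.length, hx⟩)
    (prefix_seg_iff.2 ⟨le_max_right x.length _, hy⟩)

@[simp] lemma cyl_nil : cyl [] = Set.univ := by
  ext Z
  simp [cyl]

lemma measurableSet_cyl (x : BStr) : MeasurableSet (cyl x) := by
  simp only [cyl, Set.ofPred_forall]
  exact .iInter fun i => measurable_pi_apply i.1 (measurableSet_singleton _)

lemma cyl_append_false_union_true (x : BStr) : cyl (x ++ [false]) ∪ cyl (x ++ [true]) = cyl x := by
  refine (Set.union_subset (cyl_anti (List.prefix_append _ _))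
    (cyl_anti (List.prefix_append _ _))).antisymm fun Z hZ => ?_
  have hmem := mem_cyl_seg Z (x.length + 1)
  rw [seg_succ, mem_cyl_iff.1 hZ] at hmem
  cases hb : Z x.length <;> rw [hb] at hmem
  exacts [.inl hmem, .inr hmem]

lemma pairwiseDisjoint_cyl {A : Set BStr} (hA : IsAntichain (· <+: ·) A) :
    A.PairwiseDisjoint cyl := fun _ hx _ hy hne =>
  Set.disjoint_left.2 fun _ hZx hZy => (prefix_or_prefix_of_mem_cyl hZx hZy).elim
    (hA hx hy hne) (hA hy hx hne.symm)

lemma measure_biUnion_cyl (μ : Measure Cantor) {A : Set BStr} (hA : IsAntichain (· <+: ·) A) :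
    μ (⋃ σ ∈ A, cyl σ) = ∑' σ : A, μ (cyl σ) :=
  measure_biUnion A.to_countable (pairwiseDisjoint_cyl hA) fun σ _ => measurableSet_cyl σ

lemma exists_antichain_biUnion_cyl (S : Set BStr) :
    ∃ A ⊆ S, IsAntichain (· <+: ·) A ∧ ⋃ σ ∈ S, cyl σ ⊆ ⋃ σ ∈ A, cyl σ := by
  refine ⟨{σ ∈ S | ∀ τ ∈ S, τ <+: σ → τ = σ}, Set.sep_subset _ _,
    fun σ hσ τ hτ hne h => hne (hτ.2 σ hσ.1 h), Set.iUnion₂_subset fun σ hσ Z hZ => ?_⟩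
  classical
  have hex : ∃ n, seg Z n ∈ S := ⟨σ.length, by rwa [mem_cyl_iff.1 hZ]⟩
  refine Set.mem_biUnion ⟨Nat.find_spec hex, fun τ hτ hpre => ?_⟩ (mem_cyl_seg Z _)
  have hτZ : seg Z τ.length = τ := mem_cyl_iff.1 (prefix_seg_iff.1 hpre).2
  have hle : Nat.find hex ≤ τ.length := Nat.find_min' hex (by rwa [hτZ])
  exact hpre.eq_of_length_le (by simpa using hle)

lemma exists_mem_cyl_of_chain {s : ℕ → BStr} (hs : ∀ k, s k <+: s (k + 1))
    (hlen : ∀ k, k ≤ (s k).length) : ∃ Z, ∀ k, Z ∈ cyl (s k) := by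
  have hmono : ∀ i j, i ≤ j → s i <+: s j := fun i j hij => by
    induction j, hij using Nat.le_induction with
    | base => exact List.prefix_rfl
    | succ j _ ih => exact ih.trans (hs j)
  refine ⟨fun i => (s (i + 1))[i]'(hlen (i + 1)), fun k i => ?_⟩
  rcases le_total (i.1 + 1) k with h | h
  · exact (hmono _ _ h).getElem _
  · exact ((hmono _ _ h).getElem _).symm

end Cylinders

section UniformMeasure

variable {lam : Measure Cantor}

lemma two_pow_mul_inv_two_pow (n : ℕ) : (2 : ENNReal) ^ n * 2⁻¹ ^ n = 1 := by
  rw [← mul_pow, ENNReal.mul_inv_cancel (by simp) (by simp), one_pow]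

lemma IsUniform.measure_univ (hlam : IsUniform lam) : lam Set.univ = 1 := by
  simpa using hlam []

lemma IsUniform.tsum_inv_two_pow_length_le_one (hlam : IsUniform lam) {A : Set BStr}
    (hA : IsAntichain (· <+: ·) A) : ∑' p : A, (2 : ENNReal)⁻¹ ^ p.1.length ≤ 1 := by
  calc ∑' p : A, (2 : ENNReal)⁻¹ ^ p.1.length = ∑' p : A, lam (cyl p) := by simp only [hlam _]
    _ = lam (⋃ p ∈ A, cyl p) := (measure_biUnion_cyl lam hA).symm
    _ ≤ 1 := (measure_mono (Set.subset_univ _)).trans_eq hlam.measure_univ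

instance countable_computable₂ : Countable {σ : ℕ → ℕ → BStr // Computable₂ σ} := by
  let uncurried (σ : {σ : ℕ → ℕ → BStr // Computable₂ σ}) : {f : ℕ → ℕ // Computable f} :=
    ⟨fun n => Encodable.encode (σ.1 n.unpair.1 n.unpair.2),
      Computable.encode.comp (σ.2.comp (Computable.fst.comp Computable.unpair)
        (Computable.snd.comp Computable.unpair))⟩
  refine Function.Injective.countable (f := uncurried) fun σ τ h => ?_
  ext1
  funext m i
  simpa [uncurried] using congrFun (congrArg Subtype.val h) (Nat.pair m i)

lemma measure_iInter_eq_zero_of_le_inv_two_pow {Ω : Type*} [MeasurableSpace Ω] {ρ : Measure Ω}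
    {G : ℕ → Set Ω} (hG : ∀ m, ρ (G m) ≤ 2⁻¹ ^ m) : ρ (⋂ m, G m) = 0 := by
  have hlim : Tendsto (fun m : ℕ => (2 : ENNReal)⁻¹ ^ m) atTop (nhds 0) :=
    ENNReal.tendsto_pow_atTop_nhds_zero_of_lt_one (by simp)
  exact nonpos_iff_eq_zero.1 (ge_of_tendsto' hlim fun m =>
    (measure_mono (Set.iInter_subset _ m)).trans (hG m))

lemma ae_mlRandom (lam : Measure Cantor) : ∀ᵐ Z ∂lam, MLRandom lam Z := by
  have hpass : ∀ᵐ Z ∂lam, ∀ σ : {σ : ℕ → ℕ → BStr // Computable₂ σ},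
      (∀ m, lam (⋃ i, cyl (σ.1 m i)) ≤ 2⁻¹ ^ m) → Z ∉ ⋂ m, ⋃ i, cyl (σ.1 m i) := by
    refine ae_all_iff.2 fun σ => ?_
    by_cases hσ : ∀ m, lam (⋃ i, cyl (σ.1 m i)) ≤ 2⁻¹ ^ m
    · filter_upwards [measure_eq_zero_iff_ae_notMem.1
        (measure_iInter_eq_zero_of_le_inv_two_pow hσ)] with Z hZ _ using hZ
    · exact .of_forall fun Z h => absurd h hσ
  filter_upwards [hpass] with Z hZ G ⟨⟨σ, hσ, hG⟩, hbound⟩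
  obtain rfl : G = fun m => ⋃ i, cyl (σ m i) := funext hG
  exact hZ ⟨σ, hσ⟩ hbound

end UniformMeasure

section Density

/-- The density of `μ` on the cylinder `[σ]` relative to the uniform measure: the martingale
associated with `μ`. -/
noncomputable def density (μ : Measure Cantor) (σ : BStr) : ENNReal :=
  2 ^ σ.length * μ (cyl σ)

variable {μ : Measure Cantor} {σ : BStr} {a : ENNReal}

lemma density_append_false_add_true (μ : Measure Cantor) (σ : BStr) :
    density μ (σ ++ [false]) + density μ (σ ++ [true]) = 2 * density μ σ := by
  have hdisj : Disjoint (cyl (σ ++ [false])) (cyl (σ ++ [true])) :=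
    Set.disjoint_left.2 fun Z h₀ h₁ => by
      have hsame := prefix_or_prefix_of_mem_cyl h₀ h₁
      simp at hsame
  unfold density
  rw [← cyl_append_false_union_true σ, measure_union hdisj (measurableSet_cyl _)]
  simp only [List.length_append, List.length_singleton, pow_succ]
  ring

lemma exists_density_append_le (μ : Measure Cantor) (σ : BStr) :
    ∃ b, density μ (σ ++ [b]) ≤ density μ σ := by
  by_contra! h
  have hlt := ENNReal.add_lt_add (h false) (h true)
  rw [density_append_false_add_true, two_mul] at hlt
  exact lt_irrefl _ hlt

lemma density_seg_succ_le (μ : Measure Cantor) (Z : Cantor) (n : ℕ) :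
    density μ (seg Z (n + 1)) ≤ 2 * density μ (seg Z n) := by
  simp only [density, length_seg, pow_succ', mul_assoc]
  gcongr
  exact cyl_anti (seg_prefix_seg Z n.le_succ)

/-- **Ville's inequality**, for the martingale `density μ`. -/
lemma IsUniform.mul_measure_iUnion_lt_density_le {lam : Measure Cantor} (hlam : IsUniform lam)
    (μ : Measure Cantor) (a : ENNReal) :
    a * lam (⋃ σ ∈ {σ | a < density μ σ}, cyl σ) ≤ μ Set.univ := by
  obtain ⟨A, hAS, hA, hcover⟩ := exists_antichain_biUnion_cyl {σ | a < density μ σ}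
  calc a * lam (⋃ σ ∈ {σ | a < density μ σ}, cyl σ) ≤ a * lam (⋃ σ ∈ A, cyl σ) := by gcongr
    _ = ∑' σ : A, a * 2⁻¹ ^ σ.1.length := by
      rw [measure_biUnion_cyl lam hA, ← ENNReal.tsum_mul_left]
      simp only [hlam _]
    _ ≤ ∑' σ : A, density μ σ * 2⁻¹ ^ σ.1.length := by
      gcongr with σ
      exact (hAS σ.2).le
    _ = ∑' σ : A, μ (cyl σ) := by
      congr! 2 with σ
      rw [density, mul_right_comm, two_pow_mul_inv_two_pow, one_mul]
    _ = μ (⋃ σ ∈ A, cyl σ) := (measure_biUnion_cyl μ hA).symm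
    _ ≤ μ Set.univ := measure_mono (Set.subset_univ _)

lemma exists_extension_density_le (μ : Measure Cantor) (σ : BStr) (L : ℕ) :
    ∃ τ, σ <+: τ ∧ L ≤ τ.length ∧ ∀ ρ, σ <+: ρ → ρ <+: τ → density μ ρ ≤ density μ σ := by
  induction L with
  | zero =>
    refine ⟨σ, List.prefix_rfl, Nat.zero_le _, fun ρ hσρ hρσ => ?_⟩
    rw [hρσ.eq_of_length_le hσρ.length_le]
  | succ L ih =>
    obtain ⟨τ, hστ, hL, hle⟩ := ih
    obtain ⟨b, hb⟩ := exists_density_append_le μ τ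
    refine ⟨τ ++ [b], hστ.trans (List.prefix_append _ _), by simpa using hL, fun ρ hσρ hρ => ?_⟩
    rcases List.prefix_concat_iff.1 hρ with rfl | hρτ
    · exact hb.trans (hle τ hστ List.prefix_rfl)
    · exact hle ρ hσρ hρτ

lemma exists_lt_density_seg {Z : Cantor} (hZ : μ {Z} ≠ 0) (ha : a ≠ ⊤) (N : ℕ) :
    ∃ n, N ≤ n ∧ a < density μ (seg Z n) := by
  have hlim : Tendsto (fun n : ℕ => (2 : ENNReal) ^ n * μ {Z}) atTop (nhds ⊤) := by
    simpa [ENNReal.top_mul hZ] using ENNReal.Tendsto.mul_const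
      (b := μ {Z}) (ENNReal.tendsto_pow_atTop_nhds_top_iff.2 (by norm_num))
      (.inl ENNReal.top_ne_zero)
  obtain ⟨n, hn, hlt⟩ :=
    ((eventually_ge_atTop N).and (hlim.eventually_const_lt ha.lt_top)).exists
  refine ⟨n, hn, hlt.trans_le ?_⟩
  rw [density, length_seg]
  gcongr
  exact Set.singleton_subset_iff.2 (mem_cyl_seg Z n)

lemma exists_extension_lt_density {Z : Cantor} (hZσ : Z ∈ cyl σ) (hZ : μ {Z} ≠ 0)
    (ha : a ≠ ⊤) (hσ : density μ σ ≤ a) :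
    ∃ τ, σ <+: τ ∧ a < density μ τ ∧ ∀ ρ, σ <+: ρ → ρ <+: τ → density μ ρ ≤ 2 * a := by
  classical
  have hex := exists_lt_density_seg hZ ha σ.length
  obtain ⟨hσn, hlt⟩ := Nat.find_spec hex
  refine ⟨seg Z (Nat.find hex), prefix_seg_iff.2 ⟨hσn, hZσ⟩, hlt, fun ρ hσρ hρ => ?_⟩
  obtain ⟨hρn, hZρ⟩ := prefix_seg_iff.1 hρ
  rcases hσρ.length_le.eq_or_lt with hlen | hlen
  · rw [← hσρ.eq_of_length hlen]
    exact hσ.trans (le_mul_of_one_le_left' one_le_two)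
  · obtain ⟨j, hj⟩ := Nat.exists_eq_add_one_of_ne_zero (Nat.ne_zero_of_lt hlen)
    have hjle : density μ (seg Z j) ≤ a :=
      not_lt.1 fun h => Nat.find_min hex (m := j) (by omega) ⟨by omega, h⟩
    rw [← mem_cyl_iff.1 hZρ, hj]
    exact (density_seg_succ_le μ Z j).trans (by gcongr)

end Density

section SlowGrowth

variable {μ : Measure Cantor} {f : ℕ → ℕ} {k : ℕ} {σ : BStr}

/-- The invariant of the construction of `Y` after `k` steps: `σ` respects the growth bound
`density μ ρ ≤ 2 ^ (f |ρ| + 1)`, and it may be extended by strings of density at most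
`2 ^ (k + 1)` without violating that bound. -/
structure IsStage (μ : Measure Cantor) (f : ℕ → ℕ) (k : ℕ) (σ : BStr) : Prop where
  density_prefix_le : ∀ ρ, ρ <+: σ → density μ ρ ≤ 2 ^ (f ρ.length + 1)
  density_le : density μ σ ≤ 2 ^ k
  le_growth : ∀ n, σ.length ≤ n → k ≤ f n
  le_length : k ≤ σ.length

lemma isStage_zero_nil (hμ : μ Set.univ ≤ 1) : IsStage μ f 0 [] where
  density_prefix_le ρ hρ := by
    rw [List.prefix_nil.1 hρ]
    simpa [density] using hμ.trans (one_le_pow₀ one_le_two)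
  density_le := by simpa [density] using hμ
  le_growth _ _ := Nat.zero_le _
  le_length := Nat.zero_le _

lemma IsStage.density_extension_le (hσ : IsStage μ f k σ) {τ : BStr} (hστ : σ <+: τ)
    (hτ : ∀ ρ, σ <+: ρ → ρ <+: τ → density μ ρ ≤ 2 ^ (k + 1)) (ρ : BStr) (hρ : ρ <+: τ) :
    density μ ρ ≤ 2 ^ (f ρ.length + 1) := by
  rcases List.prefix_or_prefix_of_prefix hρ hστ with hρσ | hσρ
  · exact hσ.density_prefix_le ρ hρσ
  · have hk : k ≤ f ρ.length := hσ.le_growth _ hσρ.length_le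
    exact (hτ ρ hσρ hρ).trans (by gcongr; exact one_le_two)

lemma IsStage.exists_succ (hσ : IsStage μ f k σ) (hf : Tendsto f atTop atTop)
    (hatom : ∃ Z ∈ cyl σ, μ {Z} ≠ 0) :
    ∃ τ, σ <+: τ ∧ IsStage μ f (k + 1) τ ∧ ∃ ρ, ρ <+: τ ∧ 2 ^ k < density μ ρ := by
  obtain ⟨Z, hZσ, hZ⟩ := hatom
  obtain ⟨N, hN⟩ := eventually_atTop.1 (hf.eventually_ge_atTop (k + 1))
  obtain ⟨ρ, hσρ, hρ, hclimb⟩ :=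
    exists_extension_lt_density hZσ hZ (ENNReal.pow_ne_top ENNReal.ofNat_ne_top) hσ.density_le
  obtain ⟨τ, hρτ, hlen, hwait⟩ := exists_extension_density_le μ ρ (max N (k + 1))
  have hbound : ∀ υ, σ <+: υ → υ <+: τ → density μ υ ≤ 2 ^ (k + 1) := fun υ hσυ hυτ => by
    rw [pow_succ']
    rcases List.prefix_or_prefix_of_prefix hυτ hρτ with hυρ | hρυ
    · exact hclimb υ hσυ hυρ
    · exact (hwait υ hρυ hυτ).trans (hclimb ρ hσρ List.prefix_rfl)
  have hστ := hσρ.trans hρτ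
  exact ⟨τ, hστ, ⟨hσ.density_extension_le hστ hbound, hbound τ hστ List.prefix_rfl,
    fun n hn => hN n ((le_max_left _ _).trans (hlen.trans hn)), (le_max_right _ _).trans hlen⟩,
    ρ, hρτ, hρ⟩

theorem exists_density_unbounded_le_two_pow (hμ : μ Set.univ ≤ 1)
    (hatom : ∀ σ, ∃ Z ∈ cyl σ, μ {Z} ≠ 0) (hf : Tendsto f atTop atTop) :
    ∃ Y, (∀ m, ∃ n, 2 ^ m < density μ (seg Y n)) ∧
      ∀ n, density μ (seg Y n) ≤ 2 ^ (f n + 1) := by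
  choose next hnext hstage hjump using
    fun (k : ℕ) (σ : {σ // IsStage μ f k σ}) => σ.2.exists_succ hf (hatom σ)
  let stage (k : ℕ) : {σ // IsStage μ f k σ} :=
    Nat.rec ⟨[], isStage_zero_nil hμ⟩ (fun k σ => ⟨next k σ, hstage k σ⟩) k
  obtain ⟨Y, hY⟩ := exists_mem_cyl_of_chain (s := fun k => (stage k).1)
    (fun k => hnext k (stage k)) fun k => (stage k).2.le_length
  refine ⟨Y, fun m => ?_, fun n => ?_⟩
  · obtain ⟨ρ, hρ, hlt⟩ := hjump m (stage m)
    exact ⟨ρ.length, by rwa [mem_cyl_iff.1 (cyl_anti hρ (hY (m + 1)))]⟩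
  · simpa using (stage n).2.density_prefix_le (seg Y n)
      (mem_cyl_iff.1 (hY n) ▸ seg_prefix_seg Y (stage n).2.le_length)

end SlowGrowth

section OutputMeasure

/-- The infinite sequence `x000…`. -/
def padded (x : BStr) : Cantor := fun i => x.getD i false

lemma padded_mem_cyl (x : BStr) : padded x ∈ cyl x := fun i => by simp [padded]

/-- The distribution of the padded output of `U` on a random program: the program `p` contributes
an atom of mass `2 ^ (-|p|)` at its output followed by zeros. -/
noncomputable def outputMeasure (U : BStr →. BStr) : Measure Cantor :=
  .sum fun p : U.Dom => (2 : ENNReal)⁻¹ ^ p.1.length • .dirac (padded (U.asSubtype p))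

variable {U : BStr →. BStr} {x p : BStr} {B : Set Cantor}

lemma PrefixFreeDom.isAntichain (hU : PrefixFreeDom U) : IsAntichain (· <+: ·) U.Dom :=
  fun p hp q hq hne h => hne (hU p q hp hq h)

lemma outputMeasure_univ_le_one {lam : Measure Cantor} (hlam : IsUniform lam)
    (hU : PrefixFreeDom U) : outputMeasure U Set.univ ≤ 1 := by
  simpa [outputMeasure, Measure.sum_apply] using hlam.tsum_inv_two_pow_length_le_one hU.isAntichain

lemma inv_two_pow_length_le_outputMeasure (hx : x ∈ U p) (hB : padded x ∈ B) :
    2⁻¹ ^ p.length ≤ outputMeasure U B := by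
  obtain ⟨hp, rfl⟩ := hx
  refine le_trans ?_ (Measure.le_sum _ (⟨p, hp⟩ : U.Dom) B)
  rw [Measure.smul_apply, Measure.dirac_apply_of_mem (by exact hB), smul_eq_mul, mul_one]

lemma outputMeasure_singleton_padded_ne_zero (hx : x ∈ U p) : outputMeasure U {padded x} ≠ 0 := by
  have hpos : (0 : ENNReal) < 2⁻¹ ^ p.length := ENNReal.pow_pos (by simp) _
  exact (hpos.trans_le (inv_two_pow_length_le_outputMeasure hx (Set.mem_singleton _))).ne'

lemma outputMeasure_cyl (U : BStr →. BStr) (σ : BStr) :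
    outputMeasure U (cyl σ) =
      ∑' p : {p | ∃ x ∈ U p, padded x ∈ cyl σ}, (2 : ENNReal)⁻¹ ^ p.1.length := by
  let T : Set BStr := {p | ∃ x ∈ U p, padded x ∈ cyl σ}
  let w : BStr → ENNReal := fun p => 2⁻¹ ^ p.length
  have hTdom : Function.support (T.indicator w) ⊆ U.Dom :=
    Set.support_indicator_subset.trans fun p ⟨x, hx, _⟩ => hx.fst
  have hsummand (p : U.Dom) :
      ((2 : ENNReal)⁻¹ ^ p.1.length • Measure.dirac (padded (U.asSubtype p))) (cyl σ) =
        T.indicator w p := by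
    have hp : padded (U.asSubtype p) ∈ cyl σ ↔ p.1 ∈ T := by
      refine ⟨fun h => ⟨_, Part.get_mem p.2, h⟩, ?_⟩
      rintro ⟨_, ⟨_, rfl⟩, hxσ⟩
      exact hxσ
    by_cases h : p.1 ∈ T <;> simp [Measure.dirac_apply' _ (measurableSet_cyl σ), hp, h, w]
  rw [outputMeasure, Measure.sum_apply _ (measurableSet_cyl σ), tsum_congr hsummand,
    tsum_subtype_eq_of_support_subset hTdom, ← tsum_subtype]

end OutputMeasure

section Complexity

variable {U : BStr →. BStr} {lam : Measure Cantor}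

lemma exists_length_eq_cpx (hU : ∀ x, ∃ p, x ∈ U p) (x : BStr) :
    ∃ p, x ∈ U p ∧ p.length = cpx U x := by
  obtain ⟨p, hp⟩ := hU x
  have hne : {n | ∃ q : BStr, q.length = n ∧ x ∈ U q}.Nonempty := ⟨_, p, rfl, hp⟩
  obtain ⟨q, hq, hxq⟩ := Nat.sInf_mem hne
  exact ⟨q, hxq, hq⟩

lemma UniversalPrefixFree.exists_mem (hU : UniversalPrefixFree U) (x : BStr) : ∃ p, x ∈ U p := by
  let onNil : BStr →. BStr := fun p => ((if p = [] then some x else none : Option BStr) : Part BStr)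
  have hpartrec : Partrec onNil := Computable.ofOption (Primrec.ite
    (Primrec.eq.comp .id (.const [])) (.const (some x)) (.const none)).to_comp
  have hdom (p : BStr) (hp : (onNil p).Dom) : p = [] := by
    by_contra hne
    simp [onNil, hne] at hp
  obtain ⟨_, hc⟩ := hU.2.2 onNil hpartrec fun p q hp hq _ => by rw [hdom p hp, hdom q hq]
  obtain ⟨q, -, hq⟩ := hc [] x (by simp [onNil])
  exact ⟨q, hq⟩

lemma length_le_cpx_add_of_density_le (hU : ∀ x, ∃ p, x ∈ U p) {x : BStr} {c : ℕ}
    (h : density (outputMeasure U) x ≤ 2 ^ c) : x.length ≤ cpx U x + c := by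
  obtain ⟨p, hxp, hp⟩ := exists_length_eq_cpx hU x
  have hmass := inv_two_pow_length_le_outputMeasure hxp (padded_mem_cyl x)
  have hpow : (2 : ENNReal) ^ x.length ≤ 2 ^ (p.length + c) := by
    calc (2 : ENNReal) ^ x.length = 2 ^ p.length * (2 ^ x.length * 2⁻¹ ^ p.length) := by
          rw [mul_left_comm, two_pow_mul_inv_two_pow, mul_one]
      _ ≤ 2 ^ p.length * density (outputMeasure U) x := by rw [density]; gcongr
      _ ≤ 2 ^ (p.length + c) := by rw [pow_add]; gcongr
  rw [← hp]
  exact (pow_le_pow_iff_right₀ one_lt_two).1 (by exact_mod_cast hpow)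

lemma tsum_inv_two_pow_cpx_le_one (hlam : IsUniform lam) (hU : PrefixFreeDom U)
    (hsurj : ∀ x, ∃ p, x ∈ U p) : ∑' x, (2 : ENNReal)⁻¹ ^ cpx U x ≤ 1 := by
  choose shortest hmem hlen using exists_length_eq_cpx hsurj
  let program (x : BStr) : U.Dom := ⟨shortest x, (hmem x).fst⟩
  have hinj : Function.Injective program := fun x y h =>
    Part.mem_unique (hmem x) ((congrArg (U ·.1) h).symm ▸ hmem y)
  calc ∑' x, (2 : ENNReal)⁻¹ ^ cpx U x = ∑' x, 2⁻¹ ^ (program x).1.length := by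
        simp only [program, hlen]
    _ ≤ ∑' p : U.Dom, 2⁻¹ ^ p.1.length :=
        ENNReal.tsum_comp_le_tsum_of_injective hinj fun p => 2⁻¹ ^ p.1.length
    _ ≤ 1 := hlam.tsum_inv_two_pow_length_le_one hU.isAntichain

lemma ae_finite_cpx_le_length_add (hlam : IsUniform lam) (hU : PrefixFreeDom U)
    (hsurj : ∀ x, ∃ p, x ∈ U p) (k : ℕ) :
    ∀ᵐ X ∂lam, {x | cpx U x ≤ x.length + k ∧ X ∈ cyl x}.Finite := by
  refine ae_finite_setOfPred_mem (s := fun x => {X | cpx U x ≤ x.length + k ∧ X ∈ cyl x}) ?_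
  have hbound (x : BStr) :
      lam {X | cpx U x ≤ x.length + k ∧ X ∈ cyl x} ≤ 2 ^ k * 2⁻¹ ^ cpx U x := by
    by_cases hx : cpx U x ≤ x.length + k
    · calc lam {X | cpx U x ≤ x.length + k ∧ X ∈ cyl x} ≤ lam (cyl x) :=
            measure_mono fun X hX => hX.2
        _ = 2 ^ k * 2⁻¹ ^ (x.length + k) := by
            rw [hlam, pow_add, mul_left_comm, two_pow_mul_inv_two_pow, mul_one]
        _ ≤ 2 ^ k * 2⁻¹ ^ cpx U x := by
            gcongr 2 ^ k * ?_
            exact pow_le_pow_right_of_le_one' (by simp) hx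
    · simp [hx]
  refine ne_top_of_le_ne_top ?_ (ENNReal.tsum_le_tsum hbound)
  rw [ENNReal.tsum_mul_left]
  exact ENNReal.mul_ne_top (by simp) (ne_top_of_le_ne_top ENNReal.one_ne_top
    (tsum_inv_two_pow_cpx_le_one hlam hU hsurj))

lemma ae_tendsto_cpx_seg_sub_atTop (hlam : IsUniform lam) (hU : PrefixFreeDom U)
    (hsurj : ∀ x, ∃ p, x ∈ U p) :
    ∀ᵐ X ∂lam, Tendsto (fun n => cpx U (seg X n) - n) atTop atTop := by
  filter_upwards [ae_all_iff.2 (ae_finite_cpx_le_length_add hlam hU hsurj)] with X hX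
  refine tendsto_atTop.2 fun k => ?_
  have hfin : {n | cpx U (seg X n) ≤ n + k}.Finite := by
    refine ((hX k).preimage (seg_injective X).injOn).subset fun n hn => ?_
    simpa [mem_cyl_seg] using hn
  filter_upwards [Nat.cofinite_eq_atTop ▸ hfin.compl_mem_cofinite] with n hn
  simp only [Set.mem_compl_iff, Set.mem_ofPred_eq] at hn
  omega

end Complexity

section RecursivelyEnumerable

open Encodable Nat.Partrec

variable {α β : Type*} [Primcodable α] [Primcodable β]

lemma exists_primrec_stages_of_rePred {P : α → Prop} (hP : REPred P) :
    ∃ Q : α → ℕ → Bool, Primrec₂ Q ∧ (∀ a, Monotone (Q a)) ∧ ∀ a, P a ↔ ∃ s, Q a s := by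
  obtain ⟨c, hc⟩ := Code.exists_code.1 hP
  refine ⟨fun a s => (Code.evaln s c (encode a)).isSome, ?_, fun a s t hst => ?_, fun a => ?_⟩
  · exact Primrec.option_isSome.comp (Code.primrec_evaln.comp
      ((Primrec.snd.pair (.const c)).pair (Primrec.encode.comp Primrec.fst)))
  · refine Bool.le_iff_imp.2 fun h => ?_
    obtain ⟨x, hx⟩ := Option.isSome_iff_exists.1 h
    exact Option.isSome_iff_exists.2 ⟨x, Code.evaln_mono hst hx⟩
  · have hdom : P a ↔ (Code.eval c (encode a)).Dom := by
      rw [hc]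
      simp [Part.assert, Part.bind]
    rw [hdom, Part.dom_iff_mem]
    simp only [Code.evaln_complete, Option.isSome_iff_exists, Option.mem_def]
    exact exists_comm

lemma rePred_exists_of_computablePred {R : α → ℕ → Prop}
    (hR : ComputablePred fun q : α × ℕ => R q.1 q.2) : REPred fun a => ∃ n, R a n := by
  classical
  have hfind : Partrec fun a => Nat.rfind fun n => Part.some (decide (R a n)) :=
    Partrec.rfind hR.decide.partrec
  exact hfind.dom_re.of_eq fun a => Nat.rfind_dom.trans (by simp)

lemma exists_computable₂_range_eq_of_rePred {P : α → β → Prop}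
    (hP : REPred fun q : α × β => P q.1 q.2) (hne : ∀ a, ∃ b, P a b) :
    ∃ e : α → ℕ → β, Computable₂ e ∧ ∀ a, Set.range (e a) = {b | P a b} := by
  obtain ⟨Q, hQ, -, hPQ⟩ := exists_primrec_stages_of_rePred hP
  let candidate (a : α) (n : ℕ) : Option β :=
    (decode (α := β × ℕ) n).bind fun q => if Q (a, q.1) q.2 then some q.1 else none
  have hcandidate : Computable₂ candidate := by
    have hdec : Primrec fun q : α × ℕ => decode (α := β × ℕ) q.2 := Primrec.decode.comp .snd
    refine (Primrec.option_bind hdec ?_).to_comp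
    have hb : Primrec fun r : (α × ℕ) × β × ℕ => r.2.1 := Primrec.fst.comp .snd
    exact Primrec.ite (Primrec.eq.comp (hQ.comp ((Primrec.fst.comp .fst).pair hb)
      (Primrec.snd.comp .snd)) (.const true)) (Primrec.option_some.comp hb) (.const none)
  have hmem (a : α) (b : β) : P a b ↔ ∃ n, candidate a n = some b := by
    rw [hPQ (a, b)]
    constructor
    · rintro ⟨s, hs⟩
      exact ⟨encode (b, s), by simp [candidate, hs]⟩
    · rintro ⟨n, hn⟩
      obtain ⟨⟨b', s⟩, -, hbs⟩ := Option.bind_eq_some_iff.1 hn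
      obtain ⟨hs, rfl⟩ : Q (a, b') s ∧ b' = b := by simpa using hbs
      exact ⟨s, hs⟩
  have hdom (a : α) : (Nat.rfindOpt (candidate a)).Dom :=
    Nat.rfindOpt_dom.2 ((hne a).elim fun b hb => ((hmem a b).1 hb).imp fun n hn => ⟨b, hn⟩)
  let fallback (a : α) : β := (Nat.rfindOpt (candidate a)).get (hdom a)
  have hfallback : Computable fallback :=
    (Partrec.rfindOpt hcandidate).of_eq_tot fun a => Part.get_mem _
  refine ⟨fun a n => (candidate a n).getD (fallback a),
    Computable.option_getD hcandidate (hfallback.comp .fst), fun a => ?_⟩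
  have hfallbackP : P a (fallback a) :=
    (hmem a _).2 (Nat.rfindOpt_spec (Part.get_mem (hdom a)))
  refine Set.eq_of_subset_of_subset (Set.range_subset_iff.2 fun n => ?_) fun b hb => ?_
  · cases hn : candidate a n with
    | none => simpa [hn] using hfallbackP
    | some b => simpa [hn] using (hmem a b).2 ⟨n, hn⟩
  · obtain ⟨n, hn⟩ := (hmem a b).1 hb
    exact ⟨n, by simp [hn]⟩

end RecursivelyEnumerable

section LeftCESums

open Encodable

variable {Q : BStr → ℕ → Bool} {s : ℕ} {p : BStr}

/-- The strings with code below `s` accepted by `Q` at stage `s`. -/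
def stageStrings (Q : BStr → ℕ → Bool) (s : ℕ) : List BStr :=
  (List.range s).filterMap fun n => (decode₂ BStr n).filter (Q · s)

/-- The total weight `∑ 2 ^ (-|p|)` of the strings `p` of `stageStrings Q s`, scaled by `2 ^ s` to
a natural number. -/
def stageWeight (Q : BStr → ℕ → Bool) (s : ℕ) : ℕ :=
  ((stageStrings Q s).map fun p => 2 ^ (s - p.length)).sum

lemma mem_stageStrings : p ∈ stageStrings Q s ↔ encode p < s ∧ Q p s := by
  simp [stageStrings, Option.filter_eq_some_iff, decode₂_eq_some]

lemma nodup_stageStrings (Q : BStr → ℕ → Bool) (s : ℕ) : (stageStrings Q s).Nodup := by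
  refine List.nodup_range.filterMap fun m n p hm hn => ?_
  simp only [Option.mem_def, Option.filter_eq_some_iff, decode₂_eq_some] at hm hn
  exact hm.1.symm.trans hn.1

lemma inv_two_pow_mul_stageWeight (Q : BStr → ℕ → Bool) (s : ℕ) :
    (2 : ENNReal)⁻¹ ^ s * stageWeight Q s = ∑ p ∈ (stageStrings Q s).toFinset, 2⁻¹ ^ p.length := by
  have hterm : ∀ p ∈ (stageStrings Q s).toFinset,
      (2 : ENNReal)⁻¹ ^ p.length = 2⁻¹ ^ s * (2 ^ (s - p.length) : ℕ) := fun p hp => by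
    have hle : p.length ≤ s :=
      (length_le_encode p).trans (mem_stageStrings.1 (List.mem_toFinset.1 hp)).1.le
    obtain ⟨d, rfl⟩ := Nat.exists_eq_add_of_le hle
    rw [Nat.add_sub_cancel_left, pow_add, mul_assoc, Nat.cast_pow, Nat.cast_ofNat, mul_comm (_ ^ d),
      two_pow_mul_inv_two_pow, mul_one]
  rw [Finset.sum_congr rfl hterm, ← Finset.mul_sum, ← Nat.cast_sum,
    List.sum_toFinset _ (nodup_stageStrings Q s), stageWeight]

lemma tsum_inv_two_pow_length_eq_iSup (hQ : ∀ p, Monotone (Q p)) :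
    ∑' p : {p | ∃ s, Q p s}, (2 : ENNReal)⁻¹ ^ p.1.length =
      ⨆ s, 2⁻¹ ^ s * (stageWeight Q s : ENNReal) := by
  classical
  have hstage : ∀ s, ∀ p ∈ (stageStrings Q s).toFinset, ∃ t, Q p t := fun s p hp =>
    ⟨s, (mem_stageStrings.1 (List.mem_toFinset.1 hp)).2⟩
  rw [ENNReal.tsum_eq_iSup_sum' (fun s => (stageStrings Q s).toFinset.subtype
    (· ∈ {p | ∃ t, Q p t}))]
  · refine iSup_congr fun s => ?_
    rw [inv_two_pow_mul_stageWeight]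
    exact Finset.sum_subtype_of_mem (fun p : BStr => (2 : ENNReal)⁻¹ ^ p.length) (hstage s)
  · intro F
    have hmem : ∀ p ∈ F, ∀ᶠ s in atTop, p.1 ∈ stageStrings Q s := fun p _ => by
      obtain ⟨t, ht⟩ := p.2
      filter_upwards [eventually_ge_atTop t, eventually_gt_atTop (encode p.1)] with s hts hs
      exact mem_stageStrings.2 ⟨hs, Bool.le_iff_imp.1 (hQ p hts) ht⟩
    obtain ⟨s, hs⟩ := ((eventually_all_finset F).2 hmem).exists
    exact ⟨s, fun p hp => by simpa using hs p hp⟩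

lemma primrec_two_pow : Primrec fun n : ℕ => 2 ^ n :=
  (Primrec₂.unpaired'.1 Nat.Primrec.pow).comp (.const 2) .id

lemma primrec₂_stageWeight {α : Type*} [Primcodable α] {Q : α × BStr → ℕ → Bool}
    (hQ : Primrec₂ Q) : Primrec₂ fun a s => stageWeight (fun p => Q (a, p)) s := by
  have hfilter : Primrec₂ fun (q : α × ℕ) (n : ℕ) =>
      (decode₂ BStr n).filter fun p => Q (q.1, p) q.2 := by
    have hp : Primrec fun r : ((α × ℕ) × ℕ) × BStr => r.2 := .snd
    have hr : Primrec fun r : ((α × ℕ) × ℕ) × BStr => r.1.1 := Primrec.fst.comp .fst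
    have hQr : Primrec fun r : ((α × ℕ) × ℕ) × BStr => Q (r.1.1.1, r.2) r.1.1.2 :=
      hQ.comp ((Primrec.fst.comp hr).pair hp) (Primrec.snd.comp hr)
    have hguard := Primrec.ite (Primrec.eq.comp hQr (.const true))
      (Primrec.option_some.comp hp) (.const none)
    refine (Primrec.option_bind (Primrec.decode₂.comp .snd) hguard.to₂).of_eq fun r => ?_
    cases h : decode₂ BStr r.2 <;> simp [Option.filter, h]
  have hstrings : Primrec fun q : α × ℕ => stageStrings (fun p => Q (q.1, p)) q.2 :=
    Primrec.listFilterMap (Primrec.list_range.comp .snd) hfilter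
  have hterm : Primrec₂ fun (q : α × ℕ) (p : BStr) => 2 ^ (q.2 - p.length) :=
    primrec_two_pow.comp (Primrec.nat_sub.comp (Primrec.snd.comp .fst)
      (Primrec.list_length.comp .snd))
  exact Primrec.list_foldr (Primrec.list_map hstrings hterm) (.const 0)
    (Primrec.nat_add.comp (Primrec.fst.comp .snd) (Primrec.snd.comp .snd)).to₂

lemma two_pow_lt_mul_inv_two_pow_mul_iff {m l s w : ℕ} :
    (2 : ENNReal) ^ m < 2 ^ l * (2⁻¹ ^ s * w) ↔ 2 ^ (m + s) < 2 ^ l * w := by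
  have hscaled : (2 : ENNReal) ^ s * (2 ^ l * (2⁻¹ ^ s * w)) = 2 ^ l * w := by
    rw [mul_left_comm, ← mul_assoc (2 ^ s), two_pow_mul_inv_two_pow, one_mul]
  rw [← ENNReal.mul_lt_mul_iff_right (a := 2 ^ s) (by simp) (by simp), hscaled, ← pow_add,
    add_comm s]
  norm_cast

lemma rePred_two_pow_lt_mul_tsum {α : Type*} [Primcodable α] {P : α × BStr → Prop} {L : α → ℕ}
    (hP : REPred P) (hL : Computable L) :
    REPred fun q : ℕ × α => (2 : ENNReal) ^ q.1 <
      2 ^ L q.2 * ∑' p : {p | P (q.2, p)}, (2 : ENNReal)⁻¹ ^ p.1.length := by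
  obtain ⟨Q, hQ, hmono, hPQ⟩ := exists_primrec_stages_of_rePred hP
  have hdecidable : ComputablePred fun r : (ℕ × α) × ℕ =>
      2 ^ (r.1.1 + r.2) < 2 ^ L r.1.2 * stageWeight (fun p => Q (r.1.2, p)) r.2 := by
    have ha : Computable fun r : (ℕ × α) × ℕ => r.1.2 := Computable.snd.comp .fst
    have hthreshold : Computable fun r : (ℕ × α) × ℕ => 2 ^ (r.1.1 + r.2) :=
      primrec_two_pow.to_comp.comp
        (Primrec.nat_add.to_comp.comp (Computable.fst.comp .fst) .snd)
    have hweight : Computable fun r : (ℕ × α) × ℕ =>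
        2 ^ L r.1.2 * stageWeight (fun p => Q (r.1.2, p)) r.2 :=
      Primrec.nat_mul.to_comp.comp (primrec_two_pow.to_comp.comp (hL.comp ha))
        ((primrec₂_stageWeight hQ).to_comp.comp ha .snd)
    exact Computable.computablePred (Primrec.nat_lt.decide.to_comp.comp hthreshold hweight)
  have hre := rePred_exists_of_computablePred (R := fun (q : ℕ × α) s =>
    2 ^ (q.1 + s) < 2 ^ L q.2 * stageWeight (fun p => Q (q.2, p)) s) hdecidable
  refine hre.of_eq fun ⟨m, a⟩ => ?_
  have hset : {p | P (a, p)} = {p | ∃ s, Q (a, p) s} := Set.ext fun p => hPQ (a, p)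
  rw [hset, tsum_inv_two_pow_length_eq_iSup fun p => hmono (a, p), ENNReal.mul_iSup, lt_iSup_iff]
  exact exists_congr fun s => by exact_mod_cast two_pow_lt_mul_inv_two_pow_mul_iff.symm

end LeftCESums

section Nonrandomness

variable {U : BStr →. BStr} {lam μ : Measure Cantor} {Y : Cantor}

lemma rePred_exists_mem_padded_mem_cyl (hU : Partrec U) :
    REPred fun q : BStr × BStr => ∃ x ∈ U q.2, padded x ∈ cyl q.1 := by
  have hmatch : PrimrecPred fun r : (BStr × BStr) × BStr =>
      (List.range r.1.1.length).map (padded r.2) = r.1.1 := by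
    have hσ : Primrec fun r : (BStr × BStr) × BStr => r.1.1 := Primrec.fst.comp .fst
    refine Primrec.eq.comp (Primrec.list_map (Primrec.list_range.comp
      (Primrec.list_length.comp hσ)) ?_) hσ
    exact (Primrec.list_getD false).comp (Primrec.snd.comp .fst) .snd
  have hcheck : Partrec₂ fun (q : BStr × BStr) (x : BStr) => (Part.ofOption
      (if (List.range q.1.length).map (padded x) = q.1 then some () else none) : Part Unit) :=
    Computable.ofOption (Primrec.ite hmatch (.const (some ())) (.const none)).to_comp
  refine ((hU.comp .snd).bind hcheck).dom_re.of_eq fun q => ?_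
  simp only [Part.dom_iff_mem, Part.mem_bind_iff, mem_cyl_iff, seg_eq_map_range]
  simp

theorem rePred_two_pow_lt_density_outputMeasure (hU : Partrec U) :
    REPred fun q : ℕ × BStr => 2 ^ q.1 < density (outputMeasure U) q.2 :=
  (rePred_two_pow_lt_mul_tsum (rePred_exists_mem_padded_mem_cyl hU)
    Primrec.list_length.to_comp).of_eq fun q => by rw [density, outputMeasure_cyl]

theorem not_mlRandom_of_density_unbounded (hlam : IsUniform lam) (hμ : μ Set.univ ≤ 1)
    (hre : REPred fun q : ℕ × BStr => 2 ^ q.1 < density μ q.2)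
    (hY : ∀ m, ∃ n, 2 ^ m < density μ (seg Y n)) : ¬ MLRandom lam Y := by
  obtain ⟨e, he, hrange⟩ := exists_computable₂_range_eq_of_rePred
    (P := fun m σ => 2 ^ m < density μ σ) hre fun m => (hY m).imp' _ fun _ h => h
  have hcover (m : ℕ) : ⋃ i, cyl (e m i) = ⋃ σ ∈ {σ | 2 ^ m < density μ σ}, cyl σ := by
    rw [← hrange m, Set.biUnion_range]
  have hsmall (m : ℕ) : lam (⋃ i, cyl (e m i)) ≤ 2⁻¹ ^ m := by
    rw [hcover, ← ENNReal.inv_pow]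
    exact ENNReal.le_inv_iff_mul_le.2 (by
      rw [mul_comm]
      exact (hlam.mul_measure_iUnion_lt_density_le μ _).trans hμ)
  refine fun hrandom => hrandom _ ⟨⟨e, he, fun _ => rfl⟩, hsmall⟩ (Set.mem_iInter.2 fun m => ?_)
  obtain ⟨n, hn⟩ := hY m
  rw [hcover]
  exact Set.mem_biUnion hn (mem_cyl_seg Y n)

end Nonrandomness

theorem exists_random_nonrandom_pair_with_large_complexity_sum_general
    {U : BStr →. BStr} (hU : Partrec U) (hfree : PrefixFreeDom U) (hsurj : ∀ x, ∃ p, x ∈ U p)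
    {lam : Measure Cantor} (hlam : IsUniform lam) :
    ∃ (X Y : Cantor) (c : ℕ), MLRandom lam X ∧ ¬ MLRandom lam Y ∧
      ∀ n : ℕ, 2 * n ≤ cpx U (seg X n) + cpx U (seg Y n) + c := by
  have : NeZero lam := ⟨fun h => by simpa [h] using hlam.measure_univ⟩
  obtain ⟨X, hX, hXlim⟩ :=
    ((ae_mlRandom lam).and (ae_tendsto_cpx_seg_sub_atTop hlam hfree hsurj)).exists
  have hmass : outputMeasure U Set.univ ≤ 1 := outputMeasure_univ_le_one hlam hfree
  have hatom (σ : BStr) : ∃ Z ∈ cyl σ, outputMeasure U {Z} ≠ 0 :=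
    (hsurj σ).imp' _ fun _ hp => ⟨padded_mem_cyl σ, outputMeasure_singleton_padded_ne_zero hp⟩
  obtain ⟨Y, hYunbounded, hYslow⟩ := exists_density_unbounded_le_two_pow hmass hatom hXlim
  obtain ⟨N, hN⟩ := eventually_atTop.1 (hXlim.eventually_gt_atTop 0)
  refine ⟨X, Y, N + 1, hX, not_mlRandom_of_density_unbounded hlam hmass
    (rePred_two_pow_lt_density_outputMeasure hU) hYunbounded, fun n => ?_⟩
  have hYn : n ≤ cpx U (seg Y n) + (cpx U (seg X n) - n + 1) := by
    simpa using length_le_cpx_add_of_density_le hsurj (hYslow n)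
  have hXn := hN n
  omega

/-- There are `X, Y ∈ 2^ℕ` and a constant `c` such that `X` is
Martin-Löf random, `Y` is not Martin-Löf random, and
`K(X↾n) + K(Y↾n) ≥ 2n - c` for all `n`. -/
theorem exists_random_nonrandom_pair_with_large_complexity_sum
    (UK : BStr →. BStr) (hUK : UniversalPrefixFree UK)
    (lam : Measure Cantor) (hlam : IsUniform lam) :
    ∃ (X Y : Cantor) (c : ℕ), MLRandom lam X ∧ ¬ MLRandom lam Y ∧
      ∀ n : ℕ, 2 * n ≤ cpx UK (seg X n) + cpx UK (seg Y n) + c :=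
  exists_random_nonrandom_pair_with_large_complexity_sum_general hUK.1 hUK.2.1 hUK.exists_mem hlam
end

section
/- Identify 2^ℕ × 2^ℕ with 2^ℕ via the join map (A, B) ↦ A ⊕ B, where (A⊕B)(2n) = A(n) and (A⊕B)(2n+1) = B(n). If μ and ν are C-trivial Borel probability measures on 2^ℕ, then the pushforward of the product measure μ × ν under the join map is a C-trivial measure. -/
open MeasureTheory Filter

/-- The join map `(A, B) ↦ A ⊕ B` identifying `2^ℕ × 2^ℕ` with `2^ℕ`:
`(A⊕B)(2n) = A(n)` and `(A⊕B)(2n+1) = B(n)`. -/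
def join (p : Cantor × Cantor) : Cantor :=
  fun n => if n % 2 = 0 then p.1 (n / 2) else p.2 (n / 2)

/-!
Chaitin's counting argument, made quantitative: for fixed `m` there are fewer than `2 ^ m` strings
of complexity below `m`, so at most `2 ^ (m - 2 * k)` lengths `n` are shared by at least `4 ^ k` of
them. These lengths can be enumerated, so each one is described by a `(m - 2 * k)`-bit position in
the enumeration together with `k` in unary, whence `C(n) ≤ m - k + O(1)`. Taking `m ≤ C(n) + d`,
fewer than `4 ^ (d + O(1))` strings of length `n` have complexity below `m`.

Now let `d` bound how far the complexities of `A ↾ ⌈N/2⌉` and `B ↾ ⌊N/2⌋` exceed `C(N)`. As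
`C(⌈N/2⌉)`, `C(⌊N/2⌋)` and `C(N)` agree up to a constant, each of the two segments is determined
by `N`, `C(N) + d` and an index of `2 * d + O(1)` bits. A shortest program for `N` yields `N` and,
through its length, `C(N)`; writing `d` in unary,
`C((A ⊕ B) ↾ N) ≤ C(N) + 5 * d + O(1)`. Bounding `d` by the sum of the two individual excesses
makes the right-hand side additive in `A` and `B`, so it can be integrated against `μ × ν`.
-/
section Enumeration

variable {α β γ : Type*}

/-- `F` enumerates `S` without repetition: position `i` is occupied exactly when `S` has more than
`i` elements. -/
structure Enumerates (F : ℕ →. β) (S : Set β) : Prop where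
  dom_iff : ∀ i : ℕ, (F i).Dom ↔ (i : ℕ∞) < S.encard
  mem_iff : ∀ b, b ∈ S ↔ ∃ i, b ∈ F i

/-- `t` is a first occurrence in the sequence `q`, where `none` is a blank. -/
def IsFresh (q : ℕ → Option β) (t : ℕ) : Prop :=
  (q t).isSome ∧ ∀ s < t, q s ≠ q t

open Classical in
/-- The entries of `q` in order of first occurrence, with blanks and repetitions removed. -/
noncomputable def freshSeq (q : ℕ → Option β) : ℕ →. β := fun i =>
  Nat.rfindOpt fun t => if IsFresh q t ∧ Nat.count (IsFresh q) t = i then q t else none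

theorem injOn_isFresh (q : ℕ → Option β) : {t | IsFresh q t}.InjOn q := by
  intro s hs t ht hst
  by_contra hne
  rcases lt_or_gt_of_ne hne with h | h
  · exact ht.2 s h hst
  · exact hs.2 t h hst.symm

theorem exists_isFresh {q : ℕ → Option β} {b : β} (h : ∃ t, q t = some b) :
    ∃ t, IsFresh q t ∧ q t = some b := by
  classical
  refine ⟨Nat.find h, ⟨by simp [Nat.find_spec h], fun s hs => ?_⟩, Nat.find_spec h⟩
  rw [Nat.find_spec h]
  exact Nat.find_min h hs

theorem encard_isFresh (q : ℕ → Option β) :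
    {t | IsFresh q t}.encard = {b | ∃ t, q t = some b}.encard := by
  have himage : q '' {t | IsFresh q t} = some '' {b | ∃ t, q t = some b} := by
    ext o
    constructor
    · rintro ⟨t, ht, rfl⟩
      obtain ⟨b, hb⟩ := Option.isSome_iff_exists.1 ht.1
      exact ⟨b, ⟨t, hb⟩, hb.symm⟩
    · rintro ⟨b, hb, rfl⟩
      exact exists_isFresh hb
  rw [← (injOn_isFresh q).encard_image, himage, (Option.some_injective β).encard_image]

theorem exists_count_eq_iff (p : ℕ → Prop) [DecidablePred p] (i : ℕ) :
    (∃ t, p t ∧ Nat.count p t = i) ↔ (i : ℕ∞) < {t | p t}.encard := by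
  have hlt : (i : ℕ∞) < {t | p t}.encard ↔
      ∀ hf : {t | p t}.Finite, i < hf.toFinset.card := by
    by_cases hf : {t | p t}.Finite
    · simp [hf, hf.encard_eq_coe_toFinset_card]
    · simp [hf, Set.Infinite.encard_eq hf]
  rw [hlt]
  constructor
  · rintro ⟨t, ht, rfl⟩ hf
    exact Nat.count_lt_card hf ht
  · exact fun h => ⟨Nat.nth p i, Nat.nth_mem i h, Nat.count_nth h⟩

theorem mem_freshSeq {q : ℕ → Option β} {i : ℕ} {b : β} :
    b ∈ freshSeq q i ↔ ∃ t, (IsFresh q t ∧ open Classical in Nat.count (IsFresh q) t = i) ∧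
      q t = some b := by
  classical
  constructor
  · intro h
    obtain ⟨t, ht⟩ := Nat.rfindOpt_spec h
    rw [Option.mem_def, Option.ite_none_right_eq_some] at ht
    exact ⟨t, ht⟩
  · rintro ⟨t, ⟨ht, hcount⟩, hb⟩
    have hdom : (freshSeq q i).Dom :=
      Nat.rfindOpt_dom.2 ⟨t, b, by rw [if_pos ⟨ht, hcount⟩]; exact hb⟩
    obtain ⟨s, hs⟩ := Nat.rfindOpt_spec (Part.get_mem hdom)
    rw [Option.mem_def, Option.ite_none_right_eq_some] at hs
    obtain ⟨⟨hfresh, hs⟩, hget⟩ := hs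
    obtain rfl : s = t := Nat.count_injective hfresh ht (hs.trans hcount.symm)
    rw [hb, Option.some_inj] at hget
    exact hget ▸ Part.get_mem hdom

theorem enumerates_freshSeq (q : ℕ → Option β) :
    Enumerates (freshSeq q) {b | ∃ t, q t = some b} where
  dom_iff i := by
    classical
    rw [← encard_isFresh, ← exists_count_eq_iff, Part.dom_iff_mem]
    simp only [mem_freshSeq]
    constructor
    · rintro ⟨b, t, ht, -⟩
      exact ⟨t, ht⟩
    · rintro ⟨t, ht⟩
      obtain ⟨b, hb⟩ := Option.isSome_iff_exists.1 ht.1.1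
      exact ⟨b, t, ht, hb⟩
  mem_iff b := by
    constructor
    · intro hb
      obtain ⟨t, ht, htb⟩ := exists_isFresh hb
      exact ⟨_, mem_freshSeq.2 ⟨t, ⟨ht, rfl⟩, htb⟩⟩
    · rintro ⟨i, hi⟩
      obtain ⟨t, -, ht⟩ := mem_freshSeq.1 hi
      exact ⟨t, ht⟩

variable [Primcodable α] [Primcodable β] [Primcodable γ]

theorem primrecRel_isFresh {Q : α → ℕ → Option β} (hQ : Primrec₂ Q) :
    PrimrecRel fun a t => IsFresh (Q a) t := by
  have hne : PrimrecRel fun (s : ℕ) (z : α × ℕ) => Q z.1 s ≠ Q z.1 z.2 :=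
    (Primrec.eq.comp (hQ.comp (Primrec.fst.comp Primrec.snd) Primrec.fst)
      (hQ.comp (Primrec.fst.comp Primrec.snd) (Primrec.snd.comp Primrec.snd))).not
  have hsome : PrimrecRel fun a t => (Q a t).isSome :=
    Primrec.eq.comp (Primrec.option_isSome.comp hQ) (Primrec.const true)
  have hfirst : PrimrecRel fun a t => ∀ s ∈ List.range t, Q a s ≠ Q a t :=
    hne.forall_mem_list.comp (Primrec.list_range.comp Primrec.snd) Primrec.id
  exact (hsome.and hfirst).of_eq fun z => by simp [IsFresh]

theorem primrec_count {p : α → ℕ → Prop} [∀ a, DecidablePred (p a)] (hp : PrimrecRel p) :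
    Primrec₂ fun a t => Nat.count (p a) t := by
  have hswap : PrimrecRel fun (t : ℕ) (a : α) => p a t := hp.comp Primrec.snd Primrec.fst
  classical
  refine (Primrec.list_length.comp (hswap.listFilter.comp
    (Primrec.list_range.comp Primrec.snd) Primrec.fst)).of_eq fun z => ?_
  simp only [Nat.count, List.countP_eq_length_filter]

theorem partrec_freshSeq {Q : α → ℕ → Option β} (hQ : Primrec₂ Q) :
    Partrec fun z : α × ℕ => freshSeq (Q z.1) z.2 := by
  classical
  have ha : Primrec fun w : (α × ℕ) × ℕ => w.1.1 := Primrec.fst.comp Primrec.fst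
  have hcount := (primrec_count (primrecRel_isFresh hQ)).comp ha Primrec.snd
  have hi : Primrec fun w : (α × ℕ) × ℕ => w.1.2 := Primrec.snd.comp Primrec.fst
  exact Partrec.rfindOpt (Primrec.ite
    (((primrecRel_isFresh hQ).comp ha Primrec.snd).and (Primrec.eq.comp hcount hi))
    (hQ.comp ha Primrec.snd) (Primrec.const none)).to_comp

theorem exists_primrec_stages {g : α × γ →. β} (hg : Partrec g) :
    ∃ Q : α → ℕ → Option β, Primrec₂ Q ∧
      ∀ a b, (∃ t, Q a t = some b) ↔ ∃ c, b ∈ g (a, c) := by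
  obtain ⟨code, hcode⟩ := Nat.Partrec.Code.exists_code.1 hg
  have heval (z : α × γ) : code.eval (Encodable.encode z) = (g z).map Encodable.encode := by
    simp [hcode]
  let run (a : α) (w : γ × ℕ) : Option β :=
    (code.evaln w.2 (Encodable.encode (a, w.1))).bind Encodable.decode
  have hrun : Primrec₂ run := by
    have hinput : Primrec fun z : α × γ × ℕ =>
        ((z.2.2, code), Encodable.encode (z.1, z.2.1)) :=
      ((Primrec.snd.comp Primrec.snd).pair (Primrec.const code)).pair
        (Primrec.encode.comp (Primrec.fst.pair (Primrec.fst.comp Primrec.snd)))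
    exact Primrec.option_bind (Nat.Partrec.Code.primrec_evaln.comp hinput)
      (Primrec.decode.comp Primrec.snd)
  refine ⟨fun a t => (Encodable.decode t : Option (γ × ℕ)).bind (run a),
    Primrec.option_bind (Primrec.decode.comp Primrec.snd)
      (hrun.comp (Primrec.fst.comp Primrec.fst) Primrec.snd), fun a b => ?_⟩
  constructor
  · rintro ⟨t, ht⟩
    obtain ⟨⟨c, s⟩, -, hb⟩ := Option.bind_eq_some_iff.1 ht
    obtain ⟨e, he, heb⟩ := Option.bind_eq_some_iff.1 hb
    have hmem := Nat.Partrec.Code.evaln_sound he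
    rw [heval, Part.mem_map_iff] at hmem
    obtain ⟨b', hb', rfl⟩ := hmem
    rw [Encodable.encodek, Option.some_inj] at heb
    exact ⟨c, heb ▸ hb'⟩
  · rintro ⟨c, hc⟩
    obtain ⟨s, hs⟩ := Nat.Partrec.Code.evaln_complete.1 (heval (a, c) ▸ Part.mem_map _ hc)
    exact ⟨Encodable.encode (c, s), Option.bind_eq_some_iff.2
      ⟨(c, s), Encodable.encodek _, Option.bind_eq_some_iff.2 ⟨_, hs, Encodable.encodek b⟩⟩⟩

theorem exists_partrec_enumerates {g : α × γ →. β} (hg : Partrec g) :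
    ∃ F : α × ℕ →. β, Partrec F ∧
      ∀ a, Enumerates (fun i => F (a, i)) {b | ∃ c, b ∈ g (a, c)} := by
  obtain ⟨Q, hQ, hmem⟩ := exists_primrec_stages hg
  refine ⟨_, partrec_freshSeq hQ, fun a => ?_⟩
  simp only [← hmem]
  exact enumerates_freshSeq (Q a)

end Enumeration

section Bits

/-- The number with binary digits `v`, least significant digit first. -/
def bitsToNat (v : BStr) : ℕ := v.foldr Nat.bit 0

theorem primrec_bitsToNat : Primrec bitsToNat := by
  have hbit : Primrec₂ fun (_ : BStr) (z : Bool × ℕ) => Nat.bit z.1 z.2 :=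
    Primrec.cond (Primrec.fst.comp Primrec.snd)
      (Primrec.nat_double_succ.comp (Primrec.snd.comp Primrec.snd))
      (Primrec.nat_double.comp (Primrec.snd.comp Primrec.snd))
  exact Primrec.list_foldr Primrec.id (Primrec.const 0) hbit

theorem exists_bitsToNat_eq {l i : ℕ} (hi : i < 2 ^ l) :
    ∃ v : BStr, v.length = l ∧ bitsToNat v = i := by
  induction l generalizing i with
  | zero => exact ⟨[], rfl, by simp_all [bitsToNat]⟩
  | succ l ih =>
    obtain ⟨v, hv, hvi⟩ := ih (i := i / 2) (by rw [pow_succ] at hi; omega)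
    refine ⟨decide (i % 2 = 1) :: v, by simp [hv], ?_⟩
    change Nat.bit _ (bitsToNat v) = i
    rw [hvi]
    exact Nat.bit_decide_mod_two_eq_one_shiftRight_one i

theorem primrec_pow : Primrec₂ ((· ^ ·) : ℕ → ℕ → ℕ) :=
  Primrec₂.unpaired'.1 Nat.Primrec.pow

theorem primrec_numStr : Primrec numStr :=
  (Primrec.list_map Primrec.list_range (Primrec₂.const false)).of_eq fun n => by simp [numStr]

end Bits

section Machines

variable {U : BStr →. BStr}

theorem cpx_le_length {p x : BStr} (h : x ∈ U p) : cpx U x ≤ p.length :=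
  Nat.sInf_le ⟨p, rfl, h⟩

theorem exists_mem_length_eq_cpx (hU : UniversalPlain U) (x : BStr) :
    ∃ p : BStr, x ∈ U p ∧ p.length = cpx U x := by
  obtain ⟨c, hc⟩ := hU.2 (fun p => Part.some p) Partrec.some
  obtain ⟨q, -, hq⟩ := hc x x (Part.mem_some x)
  obtain ⟨p, hp, hpx⟩ :=
    Nat.sInf_mem (s := {n | ∃ q : BStr, q.length = n ∧ x ∈ U q}) ⟨_, q, rfl, hq⟩
  exact ⟨p, hpx, hp⟩

theorem exists_cpx_le_add_length (hU : UniversalPlain U) {G : ℕ × BStr →. BStr} (hG : Partrec G) :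
    ∃ c, ∀ j w x, x ∈ G (j, w) → cpx U x ≤ j + w.length + c := by
  let parse (p : BStr) : ℕ × BStr := (p.idxOf false, p.drop (p.idxOf false + 1))
  have hidx : Primrec fun p : BStr => p.idxOf false :=
    Primrec.list_idxOf.comp (Primrec.const false) Primrec.id
  have hparse : Primrec parse :=
    hidx.pair (Primrec.list_drop.comp (Primrec.succ.comp hidx) Primrec.id)
  obtain ⟨c, hc⟩ := hU.2 (fun p => G (parse p)) (hG.comp hparse.to_comp)
  refine ⟨c + 1, fun j w x hx => ?_⟩
  let p : BStr := List.replicate j true ++ false :: w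
  have hidx_p : p.idxOf false = j := by
    simp [p, List.idxOf_append_of_notMem]
  have hparse_p : parse p = (j, w) := by
    simp only [parse, hidx_p, p]
    simp [List.drop_append]
  obtain ⟨q, hq, hxq⟩ := hc p x (by rwa [hparse_p])
  have := cpx_le_length hxq
  simp only [p, List.length_append, List.length_replicate, List.length_cons] at hq
  omega

theorem exists_cpx_map_le (hU : UniversalPlain U) {f : BStr → BStr} (hf : Computable f) :
    ∃ c, ∀ x, cpx U (f x) ≤ cpx U x + c := by
  obtain ⟨c, hc⟩ := hU.2 (fun p => (U p).map f) (hU.1.map (hf.comp Computable.snd))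
  refine ⟨c, fun x => ?_⟩
  obtain ⟨p, hpx, hp⟩ := exists_mem_length_eq_cpx hU x
  obtain ⟨q, hq, hqx⟩ := hc p (f x) (Part.mem_map f hpx)
  exact (cpx_le_length hqx).trans (hp ▸ hq)

theorem exists_cpxN_length_le (hU : UniversalPlain U) {g : ℕ → ℕ} (hg : Computable g) :
    ∃ c, ∀ x : BStr, cpxN U (g x.length) ≤ cpx U x + c :=
  exists_cpx_map_le hU (primrec_numStr.to_comp.comp (hg.comp Primrec.list_length.to_comp))

theorem exists_cpxN_map_le (hU : UniversalPlain U) {g : ℕ → ℕ} (hg : Computable g) :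
    ∃ c, ∀ n, cpxN U (g n) ≤ cpxN U n + c := by
  obtain ⟨c, hc⟩ := exists_cpxN_length_le hU hg
  exact ⟨c, fun n => by simpa [numStr, cpxN] using hc (numStr n)⟩

theorem exists_cpxN_le_cpxN_half (hU : UniversalPlain U) :
    ∃ c, ∀ n, cpxN U n ≤ cpxN U (n / 2) + c := by
  obtain ⟨c₀, h₀⟩ := exists_cpxN_map_le hU Primrec.nat_double.to_comp
  obtain ⟨c₁, h₁⟩ := exists_cpxN_map_le hU Primrec.nat_double_succ.to_comp
  refine ⟨c₀ + c₁, fun n => ?_⟩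
  rcases Nat.even_or_odd' n with ⟨k, rfl | rfl⟩
  · have := h₀ k
    rw [Nat.mul_div_cancel_left k two_pos]
    omega
  · have := h₁ k
    rw [show (2 * k + 1) / 2 = k by omega]
    omega

theorem exists_cpxN_le_cpxN_half_succ (hU : UniversalPlain U) :
    ∃ c, ∀ n, cpxN U n ≤ cpxN U ((n + 1) / 2) + c := by
  obtain ⟨c₀, h₀⟩ := exists_cpxN_map_le hU Primrec.pred.to_comp
  obtain ⟨c₁, h₁⟩ := exists_cpxN_le_cpxN_half hU
  refine ⟨c₀ + c₁, fun n => ?_⟩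
  have hpred : cpxN U n ≤ cpxN U (n + 1) + c₀ := h₀ (n + 1)
  have := h₁ (n + 1)
  omega

-- The machine learns `cpxN U N` for free, as the length of a shortest program for `N`.
theorem exists_cpx_le_of_advice (hU : UniversalPlain U)
    {W : ℕ × ℕ × BStr × BStr →. BStr} (hW : Partrec W) {e : ℕ → ℕ} (he : Computable e) :
    ∃ c, ∀ N j v₁ v₂ x, v₁.length = e j → v₂.length = e j → x ∈ W (N, cpxN U N + j, v₁, v₂) →
      cpx U x ≤ cpxN U N + 2 * e j + j + c := by
  let rest (z : ℕ × BStr) : BStr := z.2.drop (e z.1)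
  let program (z : ℕ × BStr) : BStr := (rest z).drop (e z.1)
  let G (z : ℕ × BStr) : Part BStr := (U (program z)).bind fun y =>
    W (y.length, (program z).length + z.1, z.2.take (e z.1), (rest z).take (e z.1))
  have hG : Partrec G := by
    have hej : Computable fun z : ℕ × BStr => e z.1 := he.comp Computable.fst
    have hrest : Computable rest := Primrec.list_drop.to_comp.comp hej Computable.snd
    have hprogram : Computable program := Primrec.list_drop.to_comp.comp hej hrest
    have hm : Computable fun z => (program z).length + z.1 :=
      Primrec.nat_add.to_comp.comp (Primrec.list_length.to_comp.comp hprogram) Computable.fst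
    have hv₁ : Computable fun z : ℕ × BStr => z.2.take (e z.1) :=
      Primrec.list_take.to_comp.comp hej Computable.snd
    have hv₂ : Computable fun z => (rest z).take (e z.1) :=
      Primrec.list_take.to_comp.comp hej hrest
    exact (hU.1.comp hprogram).bind (hW.comp ((Primrec.list_length.to_comp.comp
      Computable.snd).pair ((hm.pair (hv₁.pair hv₂)).comp Computable.fst)))
  obtain ⟨c, hc⟩ := exists_cpx_le_add_length hU hG
  refine ⟨c, fun N j v₁ v₂ x hv₁ hv₂ hx => ?_⟩
  obtain ⟨p, hpN, hp : p.length = cpxN U N⟩ := exists_mem_length_eq_cpx hU (numStr N)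
  have hmem : x ∈ G (j, v₁ ++ (v₂ ++ p)) := by
    have hN : (numStr N).length = N := List.length_replicate
    simp only [G, program, rest, List.drop_left' hv₁, List.drop_left' hv₂, List.take_left' hv₁,
      List.take_left' hv₂]
    exact Part.mem_bind hpN (by rwa [hN, hp])
  have := hc j _ x hmem
  simp only [List.length_append, hv₁, hv₂, hp] at this
  omega

end Machines

section Counting

variable {U : BStr →. BStr}

theorem encard_length_lt_le (m : ℕ) : {p : BStr | p.length < m}.encard ≤ 2 ^ m := by
  suffices h : {p : BStr | p.length < m}.encard + 1 ≤ 2 ^ m from le_self_add.trans h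
  induction m with
  | zero => simp
  | succ m ih =>
    have hsplit : {p : BStr | p.length < m + 1} ⊆ ({[]} ∪ List.cons false '' {p | p.length < m}) ∪
        List.cons true '' {p | p.length < m} := by
      rintro (_ | ⟨_ | _, p⟩) hp <;> simp_all
    have hcons (b : Bool) : (List.cons b '' {p | p.length < m}).encard =
        {p : BStr | p.length < m}.encard := (List.cons_injective).encard_image _
    calc {p : BStr | p.length < m + 1}.encard + 1
        ≤ (1 + {p : BStr | p.length < m}.encard) + {p : BStr | p.length < m}.encard + 1 := by
          gcongr
          refine (Set.encard_le_encard hsplit).trans ((Set.encard_union_le _ _).trans ?_)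
          rw [hcons]
          gcongr
          refine (Set.encard_union_le _ _).trans ?_
          rw [hcons, Set.encard_singleton]
      _ = 2 * ({p : BStr | p.length < m}.encard + 1) := by ring
      _ ≤ 2 * 2 ^ m := by gcongr
      _ = 2 ^ (m + 1) := (pow_succ' 2 m).symm

theorem encard_cpx_lt_le (hU : UniversalPlain U) (m : ℕ) : {x | cpx U x < m}.encard ≤ 2 ^ m := by
  choose p hpx hp using exists_mem_length_eq_cpx hU
  refine (Set.encard_le_encard_of_injOn (f := p) (fun x hx => ?_) fun x _ y _ hxy => ?_).trans
    (encard_length_lt_le m)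
  · exact (hp x).trans_lt hx
  · exact Part.mem_unique (hpx x) (hxy ▸ hpx y)

theorem encard_mul_le_of_le_encard_fiber {ι κ : Type*} {s : Set κ} {t : Set ι} (f : ι → κ) (c : ℕ)
    (h : ∀ y ∈ s, (c : ℕ∞) ≤ {x ∈ t | f x = y}.encard) : s.encard * c ≤ t.encard := by
  classical
  rcases t.finite_or_infinite with ht | ht
  · rcases Nat.eq_zero_or_pos c with rfl | hc
    · simp
    have hst : s ⊆ f '' t := fun y hy => by
      obtain ⟨x, hx, hxy⟩ := Set.encard_pos.1 ((Nat.cast_pos.2 hc).trans_le (h y hy))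
      exact ⟨x, hx, hxy⟩
    lift s to Finset κ using (ht.image f).subset hst
    lift t to Finset ι using ht
    by_contra! hlt
    rw [Set.encard_coe_eq_coe_finsetCard, Set.encard_coe_eq_coe_finsetCard] at hlt
    obtain ⟨y, hy, hyc⟩ := Finset.exists_card_fiber_lt_of_card_lt_mul (f := f)
      (by exact_mod_cast hlt)
    have hfiber : {x ∈ (t : Set ι) | f x = y} = ({x ∈ t | f x = y} : Finset ι) := by ext; simp
    have hyc' := h y hy
    rw [hfiber, Set.encard_coe_eq_coe_finsetCard, Nat.cast_le] at hyc'
    exact hyc.not_ge hyc'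
  · simp [ht.encard_eq]

/-- The strings of length `n` and complexity below `m`. -/
def lowCpx (U : BStr →. BStr) (n m : ℕ) : Set BStr := {x | x.length = n ∧ cpx U x < m}

theorem mem_lowCpx_iff (hU : UniversalPlain U) {n m : ℕ} {x : BStr} :
    x ∈ lowCpx U n m ↔ x.length = n ∧ ∃ p, p.length < m ∧ x ∈ U p := by
  refine and_congr_right fun _ =>
    ⟨fun hx => ?_, fun ⟨p, hp, hpx⟩ => (cpx_le_length hpx).trans_lt hp⟩
  obtain ⟨p, hpx, hp⟩ := exists_mem_length_eq_cpx hU x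
  exact ⟨p, hp ▸ hx, hpx⟩

theorem exists_partrec_enumerates_lowCpx (hU : UniversalPlain U) :
    ∃ F : (ℕ × ℕ) × ℕ →. BStr, Partrec F ∧
      ∀ n m, Enumerates (fun i => F ((n, m), i)) (lowCpx U n m) := by
  let g (z : (ℕ × ℕ) × BStr) : Part BStr := (U z.2).bind fun x =>
    ((if z.2.length < z.1.2 ∧ x.length = z.1.1 then some x else none : Option BStr) : Part BStr)
  have hg : Partrec g := by
    have hx : Primrec fun w : ((ℕ × ℕ) × BStr) × BStr => w.2.length :=
      Primrec.list_length.comp Primrec.snd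
    have hp : Primrec fun w : ((ℕ × ℕ) × BStr) × BStr => w.1.2.length :=
      Primrec.list_length.comp (Primrec.snd.comp Primrec.fst)
    have hnm : Primrec fun w : ((ℕ × ℕ) × BStr) × BStr => w.1.1 := Primrec.fst.comp Primrec.fst
    refine (hU.1.comp Computable.snd).bind (Computable.ofOption (Primrec.to_comp ?_))
    exact Primrec.ite ((Primrec.nat_lt.comp hp (Primrec.snd.comp hnm)).and
      (Primrec.eq.comp hx (Primrec.fst.comp hnm))) (Primrec.option_some.comp Primrec.snd)
      (Primrec.const none)
  obtain ⟨F, hF, hFg⟩ := exists_partrec_enumerates hg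
  refine ⟨F, hF, fun n m => ?_⟩
  have hg_iff : lowCpx U n m = {x | ∃ p, x ∈ g ((n, m), p)} := by
    ext x
    rw [mem_lowCpx_iff hU]
    simp only [g, Set.mem_ofPred_eq, Part.mem_bind_iff, Part.mem_ofOption, Option.mem_def,
      Option.ite_none_right_eq_some, Option.some_inj]
    constructor
    · rintro ⟨hxn, p, hpm, hpx⟩
      exact ⟨p, x, hpx, ⟨hpm, hxn⟩, rfl⟩
    · rintro ⟨p, x, hpx, ⟨hpm, hxn⟩, rfl⟩
      exact ⟨hxn, p, hpm, hpx⟩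
  rw [hg_iff]
  exact hFg (n, m)

theorem encard_pow_le_encard_lowCpx_mul_le (hU : UniversalPlain U) (m k : ℕ) :
    {n | (4 : ℕ∞) ^ k ≤ (lowCpx U n m).encard}.encard * 4 ^ k ≤ 2 ^ m := by
  have h := encard_mul_le_of_le_encard_fiber (s := {n | (4 : ℕ∞) ^ k ≤ (lowCpx U n m).encard})
    (t := {x | cpx U x < m}) List.length (4 ^ k) fun n hn => ?_
  · exact_mod_cast h.trans (encard_cpx_lt_le hU m)
  · have hfiber : {x ∈ {x | cpx U x < m} | x.length = n} = lowCpx U n m :=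
      Set.ext fun x => and_comm
    rw [hfiber]
    exact_mod_cast hn

theorem exists_partrec_enumerates_pow_le_encard_lowCpx (hU : UniversalPlain U) :
    ∃ F : (ℕ × ℕ) × ℕ →. ℕ, Partrec F ∧ ∀ m k,
      Enumerates (fun i => F ((m, k), i)) {n | (4 : ℕ∞) ^ k ≤ (lowCpx U n m).encard} := by
  obtain ⟨L, hL, hLow⟩ := exists_partrec_enumerates_lowCpx hU
  let g (z : (ℕ × ℕ) × ℕ) : Part ℕ := (L ((z.2, z.1.1), 4 ^ z.1.2 - 1)).map fun _ => z.2
  have hg : Partrec g := by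
    have hlast : Primrec fun z : (ℕ × ℕ) × ℕ => 4 ^ z.1.2 - 1 :=
      Primrec.nat_sub.comp (primrec_pow.comp (Primrec.const 4) (Primrec.snd.comp Primrec.fst))
        (Primrec.const 1)
    exact (hL.comp ((Primrec.snd.pair (Primrec.fst.comp Primrec.fst)).pair hlast).to_comp).map
      (Computable.snd.comp Computable.fst)
  obtain ⟨F, hF, hFg⟩ := exists_partrec_enumerates hg
  refine ⟨F, hF, fun m k => ?_⟩
  have hg_iff : {n | (4 : ℕ∞) ^ k ≤ (lowCpx U n m).encard} = {n | ∃ n', n ∈ g ((m, k), n')} := by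
    ext n
    have hdom : (L ((n, m), 4 ^ k - 1)).Dom ↔ (4 : ℕ∞) ^ k ≤ (lowCpx U n m).encard := by
      rw [(hLow n m).dom_iff, ← ENat.add_one_le_iff (ENat.natCast_ne_top _)]
      norm_cast
      rw [Nat.sub_add_cancel (Nat.one_le_pow _ _ (by norm_num))]
    simp [g, ← hdom, Part.dom_iff_mem]
  rw [hg_iff]
  exact hFg (m, k)

theorem le_and_lt_two_pow_sub_of_succ_mul_two_pow_le {i a m : ℕ} (h : (i + 1) * 2 ^ a ≤ 2 ^ m) :
    a ≤ m ∧ i < 2 ^ (m - a) := by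
  have ham : a ≤ m := (Nat.pow_le_pow_iff_right one_lt_two).1
    ((Nat.le_mul_of_pos_left _ i.succ_pos).trans h)
  refine ⟨ham, Nat.le_of_mul_le_mul_right (c := 2 ^ a) ?_ (by positivity)⟩
  rwa [← pow_add, Nat.sub_add_cancel ham]

theorem exists_cpxN_add_le_of_pow_le_encard_lowCpx (hU : UniversalPlain U) :
    ∃ c, ∀ n m k : ℕ, (4 : ℕ∞) ^ k ≤ (lowCpx U n m).encard → cpxN U n + k ≤ m + c := by
  obtain ⟨F, hF, hFenum⟩ := exists_partrec_enumerates_pow_le_encard_lowCpx hU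
  let G (z : ℕ × BStr) : Part BStr :=
    (F ((z.2.length + 2 * z.1, z.1), bitsToNat z.2)).map numStr
  have hG : Partrec G := by
    have hm : Primrec fun z : ℕ × BStr => z.2.length + 2 * z.1 :=
      Primrec.nat_add.comp (Primrec.list_length.comp Primrec.snd)
        (Primrec.nat_double.comp Primrec.fst)
    exact (hF.comp ((hm.pair Primrec.fst).pair (primrec_bitsToNat.comp Primrec.snd)).to_comp).map
      (primrec_numStr.to_comp.comp Computable.snd)
  obtain ⟨c, hc⟩ := exists_cpx_le_add_length hU hG
  refine ⟨c, fun n m k hn => ?_⟩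
  obtain ⟨i, hi⟩ := ((hFenum m k).mem_iff n).1 hn
  have hcount : (i + 1) * 2 ^ (2 * k) ≤ 2 ^ m := by
    have hdom := ((hFenum m k).dom_iff i).1 (Part.dom_iff_mem.2 ⟨n, hi⟩)
    have hle := (mul_le_mul_left (Order.add_one_le_of_lt hdom) _).trans
      (encard_pow_le_encard_lowCpx_mul_le hU m k)
    rw [pow_mul]
    exact_mod_cast hle
  obtain ⟨hkm, hi_lt⟩ := le_and_lt_two_pow_sub_of_succ_mul_two_pow_le hcount
  obtain ⟨v, hv, hvi⟩ := exists_bitsToNat_eq hi_lt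
  have hmem : numStr n ∈ G (k, v) := by
    simp only [G, hv, hvi, Nat.sub_add_cancel hkm]
    exact Part.mem_map numStr hi
  have := hc k v _ hmem
  change cpxN U n ≤ _ at this
  omega

theorem exists_partrec_mem_of_cpx_lt (hU : UniversalPlain U) :
    ∃ D : (ℕ × ℕ) × BStr →. BStr, Partrec D ∧ ∃ c, ∀ n m d x, x ∈ lowCpx U n m →
      m ≤ cpxN U n + d → ∃ v, v.length = 2 * (d + c) ∧ x ∈ D ((n, m), v) := by
  obtain ⟨F, hF, hFenum⟩ := exists_partrec_enumerates_lowCpx hU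
  obtain ⟨c, hc⟩ := exists_cpxN_add_le_of_pow_le_encard_lowCpx hU
  refine ⟨fun z => F (z.1, bitsToNat z.2),
    hF.comp (Computable.fst.pair (primrec_bitsToNat.to_comp.comp Computable.snd)), c + 1,
    fun n m d x hx hm => ?_⟩
  have hcard : (lowCpx U n m).encard < 4 ^ (d + (c + 1)) := by
    by_contra! h
    have := hc n m _ h
    omega
  obtain ⟨i, hi⟩ := ((hFenum n m).mem_iff x).1 hx
  have hi_lt : i < 2 ^ (2 * (d + (c + 1))) := by
    rw [pow_mul]
    have hdom := ((hFenum n m).dom_iff i).1 (Part.dom_iff_mem.2 ⟨x, hi⟩)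
    exact_mod_cast hdom.trans hcard
  obtain ⟨v, hv, rfl⟩ := exists_bitsToNat_eq hi_lt
  exact ⟨v, hv, hi⟩

end Counting

section Combination

variable {U : BStr →. BStr} {g h : ℕ → ℕ} {T : ℕ × BStr × BStr → BStr}

theorem exists_cpx_le_of_cpx_le_cpxN_add (hU : UniversalPlain U)
    (hg : Computable g) (hh : Computable h) (hT : Computable T)
    (hgU : ∃ c, ∀ N, cpxN U N ≤ cpxN U (g N) + c) (hhU : ∃ c, ∀ N, cpxN U N ≤ cpxN U (h N) + c) :
    ∃ c, ∀ N d x y, x.length = g N → y.length = h N → cpx U x ≤ cpxN U N + d →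
      cpx U y ≤ cpxN U N + d → cpx U (T (N, x, y)) ≤ cpxN U N + 5 * d + c := by
  obtain ⟨D, hD, cD, hDmem⟩ := exists_partrec_mem_of_cpx_lt hU
  obtain ⟨cg, hcg⟩ := hgU
  obtain ⟨ch, hch⟩ := hhU
  let W (z : ℕ × ℕ × BStr × BStr) : Part BStr := (D ((g z.1, z.2.1), z.2.2.1)).bind fun x =>
    (D ((h z.1, z.2.1), z.2.2.2)).map fun y => T (z.1, x, y)
  have hW : Partrec W := by
    have hm : Computable fun z : ℕ × ℕ × BStr × BStr => z.2.1 :=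
      Computable.fst.comp Computable.snd
    have hv : Computable fun z : ℕ × ℕ × BStr × BStr => z.2.2 :=
      Computable.snd.comp Computable.snd
    have hx := hD.comp (((hg.comp Computable.fst).pair hm).pair (Computable.fst.comp hv))
    have hy := hD.comp (((hh.comp Computable.fst).pair hm).pair (Computable.snd.comp hv))
    exact hx.bind ((hy.comp Computable.fst).map (hT.comp
      ((Computable.fst.comp (Computable.fst.comp Computable.fst)).pair
        ((Computable.snd.comp Computable.fst).pair Computable.snd))))
  have he : Computable fun j => 2 * (j + (cg + ch) + cD) :=
    (Primrec.nat_double.comp (Primrec.nat_add.comp (Primrec.nat_add.comp Primrec.id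
      (Primrec.const (cg + ch))) (Primrec.const cD))).to_comp
  obtain ⟨c, hc⟩ := exists_cpx_le_of_advice hU hW he
  refine ⟨4 * (1 + (cg + ch) + cD) + 1 + c, fun N d x y hx hy hxd hyd => ?_⟩
  have hgN := hcg N
  have hhN := hch N
  obtain ⟨v₁, hv₁, hxv⟩ := hDmem (g N) (cpxN U N + (d + 1)) (d + 1 + (cg + ch)) x
    ⟨hx, by omega⟩ (by omega)
  obtain ⟨v₂, hv₂, hyv⟩ := hDmem (h N) (cpxN U N + (d + 1)) (d + 1 + (cg + ch)) y
    ⟨hy, by omega⟩ (by omega)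
  have := hc N (d + 1) v₁ v₂ (T (N, x, y)) hv₁ hv₂ (Part.mem_bind hxv (Part.mem_map _ hyv))
  omega

theorem exists_cpx_add_le (hU : UniversalPlain U)
    (hg : Computable g) (hh : Computable h) (hT : Computable T)
    (hgU : ∃ c, ∀ N, cpxN U N ≤ cpxN U (g N) + c) (hhU : ∃ c, ∀ N, cpxN U N ≤ cpxN U (h N) + c) :
    ∃ c, ∀ N x y, x.length = g N → y.length = h N →
      cpx U (T (N, x, y)) + 5 * (cpxN U (g N) + cpxN U (h N)) ≤
        cpxN U N + 5 * (cpx U x + cpx U y) + c := by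
  obtain ⟨c, hc⟩ := exists_cpx_le_of_cpx_le_cpxN_add hU hg hh hT hgU hhU
  obtain ⟨cl, hcl⟩ := exists_cpxN_length_le hU Computable.id
  obtain ⟨cg, hcg⟩ := exists_cpxN_map_le hU hg
  obtain ⟨ch, hch⟩ := exists_cpxN_map_le hU hh
  refine ⟨5 * (2 * cl + cg + ch) + c, fun N x y hx hy => ?_⟩
  have hxl : cpxN U (g N) ≤ cpx U x + cl := hx ▸ hcl x
  have hyl : cpxN U (h N) ≤ cpx U y + cl := hy ▸ hcl y
  have hgN := hcg N
  have hhN := hch N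
  have := hc N ((cpx U x + cl + cg - cpxN U (g N)) + (cpx U y + cl + ch - cpxN U (h N))) x y hx hy
    (by omega) (by omega)
  omega

end Combination

section Join

/-- The finite analogue of `join`: the first `N` bits of `x0^∞ ⊕ y0^∞`. -/
def joinStr (N : ℕ) (x y : BStr) : BStr :=
  seg (_root_.join (fun i => x.getD i false, fun i => y.getD i false)) N

theorem primrec_joinStr : Primrec fun z : ℕ × BStr × BStr => joinStr z.1 z.2.1 z.2.2 := by
  have hhalf : Primrec fun w : (ℕ × BStr × BStr) × ℕ => w.2 / 2 :=
    Primrec.nat_div.comp Primrec.snd (Primrec.const 2)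
  have hbit : Primrec₂ fun (z : ℕ × BStr × BStr) (i : ℕ) =>
      if i % 2 = 0 then z.2.1.getD (i / 2) false else z.2.2.getD (i / 2) false :=
    Primrec.ite (Primrec.eq.comp (Primrec.nat_mod.comp Primrec.snd (Primrec.const 2))
      (Primrec.const 0))
      ((Primrec.list_getD false).comp
        (Primrec.fst.comp (Primrec.snd.comp Primrec.fst)) hhalf)
      ((Primrec.list_getD false).comp
        (Primrec.snd.comp (Primrec.snd.comp Primrec.fst)) hhalf)
  refine (Primrec.list_map (Primrec.list_range.comp Primrec.fst) hbit).of_eq fun z => ?_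
  exact List.ext_getElem (by simp [joinStr, seg]) (by simp [joinStr, seg, _root_.join])

theorem getD_seg {Z : Cantor} {n i : ℕ} (hi : i < n) : (seg Z n).getD i false = Z i := by
  simp [seg, hi]

theorem seg_join (A B : Cantor) (N : ℕ) :
    seg (_root_.join (A, B)) N = joinStr N (seg A ((N + 1) / 2)) (seg B (N / 2)) := by
  refine List.ofFn_inj.2 (funext fun i => ?_)
  simp only [_root_.join]
  split_ifs
  · rw [getD_seg (by omega)]
  · rw [getD_seg (by omega)]

theorem exists_cpx_seg_join_add_le {U : BStr →. BStr} (hU : UniversalPlain U) :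
    ∃ c : ℕ, ∀ N A B,
      cpx U (seg (_root_.join (A, B)) N) + 5 * (cpxN U ((N + 1) / 2) + cpxN U (N / 2)) ≤
        cpxN U N + 5 * (cpx U (seg A ((N + 1) / 2)) + cpx U (seg B (N / 2))) + c := by
  have hhalf : Computable fun N => N / 2 :=
    (Primrec.nat_div.comp Primrec.id (Primrec.const 2)).to_comp
  obtain ⟨c, hc⟩ := exists_cpx_add_le hU (hhalf.comp Computable.succ) hhalf
    primrec_joinStr.to_comp (exists_cpxN_le_cpxN_half_succ hU) (exists_cpxN_le_cpxN_half hU)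
  refine ⟨c, fun N A B => ?_⟩
  rw [seg_join]
  exact hc N _ _ List.length_ofFn List.length_ofFn

end Join

section Average

theorem measurable_restrict_fin (n : ℕ) : Measurable fun (Z : Cantor) (i : Fin n) => Z i :=
  measurable_pi_lambda _ fun _ => measurable_pi_apply _

theorem measurable_join : Measurable _root_.join := by
  refine measurable_pi_lambda _ fun n => ?_
  unfold _root_.join
  split_ifs
  · exact (measurable_pi_apply _).comp measurable_fst
  · exact (measurable_pi_apply _).comp measurable_snd

theorem integrable_seg (μ : Measure Cantor) [IsFiniteMeasure μ] (f : BStr → ℝ) (n : ℕ) :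
    Integrable (fun Z => f (seg Z n)) μ :=
  (Integrable.of_finite (f := fun v : Fin n → Bool => f (List.ofFn v))).comp_measurable
    (measurable_restrict_fin n)

theorem preimage_restrict_fin_singleton {n : ℕ} (v : Fin n → Bool) :
    (fun (Z : Cantor) (i : Fin n) => Z i) ⁻¹' {v} = cyl (List.ofFn v) := by
  ext Z
  simp only [cyl, Set.mem_ofPred_eq, Set.mem_preimage, Set.mem_singleton_iff, funext_iff]
  exact ⟨fun h i => by simpa using h ⟨i, by simpa using i.2⟩,
    fun h i => by simpa using h ⟨i, by simp⟩⟩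

theorem avgCpx_eq_integral (U : BStr →. BStr) (μ : Measure Cantor) [IsFiniteMeasure μ] (n : ℕ) :
    avgCpx U μ n = ∫ Z, (cpx U (seg Z n) : ℝ) ∂μ := by
  have hmap : ∫ Z, (cpx U (seg Z n) : ℝ) ∂μ = ∫ v, (cpx U (List.ofFn v) : ℝ)
      ∂(μ.map fun (Z : Cantor) (i : Fin n) => Z i) :=
    (integral_map (measurable_restrict_fin n).aemeasurable
      (measurable_of_finite fun v => (cpx U (List.ofFn v) : ℝ)).aestronglyMeasurable).symm
  rw [hmap, integral_fintype Integrable.of_finite]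
  refine Finset.sum_congr rfl fun v _ => ?_
  rw [smul_eq_mul, mul_comm, Measure.real,
    Measure.map_apply (measurable_restrict_fin n) (measurableSet_singleton v),
    preimage_restrict_fin_singleton]

theorem avgCpx_map_join_le (U : BStr →. BStr) (μ ν : Measure Cantor) [IsProbabilityMeasure μ]
    [IsProbabilityMeasure ν] {N k l : ℕ} {a b r : ℝ}
    (h : ∀ A B, (cpx U (seg (_root_.join (A, B)) N) : ℝ) ≤
      a * cpx U (seg A k) + b * cpx U (seg B l) + r) :
    avgCpx U (Measure.map _root_.join (μ.prod ν)) N ≤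
      a * avgCpx U μ k + b * avgCpx U ν l + r := by
  have := Measure.isProbabilityMeasure_map (μ := μ.prod ν) measurable_join.aemeasurable
  have hA := ((integrable_seg μ (fun x => (cpx U x : ℝ)) k).comp_fst ν).const_mul a
  have hB := ((integrable_seg ν (fun x => (cpx U x : ℝ)) l).comp_snd μ).const_mul b
  have hAB : Integrable (fun p : Cantor × Cantor =>
      a * (cpx U (seg p.1 k) : ℝ) + b * cpx U (seg p.2 l)) (μ.prod ν) := hA.add hB
  have hJ := integrable_seg (Measure.map _root_.join (μ.prod ν)) (fun x => (cpx U x : ℝ)) N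
  calc avgCpx U (Measure.map _root_.join (μ.prod ν)) N
      = ∫ p, (cpx U (seg (_root_.join p) N) : ℝ) ∂μ.prod ν := by
        rw [avgCpx_eq_integral, integral_map measurable_join.aemeasurable hJ.aestronglyMeasurable]
    _ ≤ ∫ p, (a * cpx U (seg p.1 k) + b * cpx U (seg p.2 l) + r) ∂μ.prod ν :=
        integral_mono (hJ.comp_measurable measurable_join)
          (hAB.add (integrable_const r)) fun p => h p.1 p.2
    _ = a * avgCpx U μ k + b * avgCpx U ν l + r := by
        rw [integral_add hAB (integrable_const r), integral_add hA hB,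
          integral_const_mul, integral_const_mul, avgCpx_eq_integral, avgCpx_eq_integral,
          integral_fun_fst fun A => (cpx U (seg A k) : ℝ),
          integral_fun_snd fun B => (cpx U (seg B l) : ℝ)]
        simp

end Average

theorem product_of_CTrivial_is_CTrivial_general
    (U : BStr →. BStr) (hU : UniversalPlain U)
    (μ ν : Measure Cantor) [IsProbabilityMeasure μ] [IsProbabilityMeasure ν]
    (hμ : MeasTrivial U μ) (hν : MeasTrivial U ν) :
    MeasTrivial U (Measure.map _root_.join (μ.prod ν)) := by
  obtain ⟨c, hc⟩ := exists_cpx_seg_join_add_le hU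
  obtain ⟨cμ, hcμ⟩ := hμ
  obtain ⟨cν, hcν⟩ := hν
  refine ⟨5 * (cμ + cν) + c, fun N => ?_⟩
  have hpointwise (A B : Cantor) : (cpx U (seg (_root_.join (A, B)) N) : ℝ) ≤
      5 * cpx U (seg A ((N + 1) / 2)) + 5 * cpx U (seg B (N / 2)) +
        (cpxN U N + c - 5 * (cpxN U ((N + 1) / 2) + cpxN U (N / 2))) := by
    have hcast : (cpx U (seg (_root_.join (A, B)) N) : ℝ) +
        5 * (cpxN U ((N + 1) / 2) + cpxN U (N / 2)) ≤
          cpxN U N + 5 * (cpx U (seg A ((N + 1) / 2)) + cpx U (seg B (N / 2))) + c :=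
      mod_cast hc N A B
    linarith
  linarith [avgCpx_map_join_le U μ ν hpointwise, hcμ ((N + 1) / 2), hcν (N / 2)]

/-- if `μ` and `ν` are C-trivial measures, then the pushforward
of `μ × ν` under the join map is C-trivial. -/
theorem product_of_CTrivial_is_CTrivial
    (U : BStr →. BStr) (hU : UniversalPlain U)
    (hlen : ∀ x : BStr, cpxN U x.length ≤ cpx U x)
    (μ ν : Measure Cantor) [IsProbabilityMeasure μ] [IsProbabilityMeasure ν]
    (hμ : MeasTrivial U μ) (hν : MeasTrivial U ν) :
    MeasTrivial U (Measure.map join (μ.prod ν)) :=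
  product_of_CTrivial_is_CTrivial_general U hU μ ν hμ hν
end
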